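/- arXiv:2002.06577 — 3 statements merged into one kernel-verified Lean document; each statement's English description precedes it below -/
import Mathlib

section
/- Let A ∈ ℝ^{n×n}, B ∈ ℝ^{n×m} with (A,B) stabilizable and all eigenvalues of A in the closed unit disc. Then for every ε > 0 the discrete algebraic Riccati equation AᵀP A − P − AᵀP B (I + BᵀP B)^{−1} BᵀP A + εI = 0 has a unique positive definite solution P_ε. -/
open Matrix Filter Topology Kronecker
open scoped Classical

noncomputable section

/-- A complex square matrix is Schur stable if all its eigenvalues lie in the open unit disc. -/
def SchurStableC {ι : Type*} [Fintype ι] [DecidableEq ι] (M : Matrix ι ι ℂ) : Prop :=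
  ∀ μ ∈ spectrum ℂ M, ‖μ‖ < 1

/-- A real square matrix is Schur stable if all its (complex) eigenvalues lie in the open
unit disc. -/
def SchurStable {ι : Type*} [Fintype ι] [DecidableEq ι] (M : Matrix ι ι ℝ) : Prop :=
  SchurStableC (M.map Complex.ofReal)

/-- All eigenvalues of a real square matrix lie in the closed unit disc. -/
def EigInClosedUnitDisc {ι : Type*} [Fintype ι] [DecidableEq ι] (M : Matrix ι ι ℝ) : Prop :=
  ∀ μ ∈ spectrum ℂ (M.map Complex.ofReal), ‖μ‖ ≤ 1

/-- The pair (A,B) is stabilizable. -/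
def Stabilizable {n m : ℕ} (A : Matrix (Fin n) (Fin n) ℝ) (B : Matrix (Fin n) (Fin m) ℝ) : Prop :=
  ∃ K : Matrix (Fin m) (Fin n) ℝ, SchurStable (A - B * K)

/-- The pair (C,A) is detectable. -/
def Detectable {n q : ℕ} (C : Matrix (Fin q) (Fin n) ℝ) (A : Matrix (Fin n) (Fin n) ℝ) : Prop :=
  ∃ F : Matrix (Fin n) (Fin q) ℝ, SchurStable (A - F * C)

/-- `P` is a positive definite solution of the discrete algebraic Riccati equation
`AᵀPA − P − AᵀPB(I + BᵀPB)⁻¹BᵀPA + εI = 0`. -/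
def IsDARESol {n m : ℕ} (A : Matrix (Fin n) (Fin n) ℝ) (B : Matrix (Fin n) (Fin m) ℝ)
    (ε : ℝ) (P : Matrix (Fin n) (Fin n) ℝ) : Prop :=
  P.PosDef ∧
    Aᵀ * P * A - P - Aᵀ * P * B * (1 + Bᵀ * P * B)⁻¹ * (Bᵀ * P * A)
      + ε • (1 : Matrix (Fin n) (Fin n) ℝ) = 0

/-- The low-gain feedback `K = (I + BᵀPB)⁻¹BᵀPA`. -/
def gainK {n m : ℕ} (A : Matrix (Fin n) (Fin n) ℝ) (B : Matrix (Fin n) (Fin m) ℝ)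
    (P : Matrix (Fin n) (Fin n) ℝ) : Matrix (Fin m) (Fin n) ℝ :=
  (1 + Bᵀ * P * B)⁻¹ * (Bᵀ * P * A)

/-- `ω_max`: zero if `A` is Schur stable, otherwise the largest `ω ∈ [0,π]` with
`det(e^{iω}I − A) = 0`. -/
def omegaMax {n : ℕ} (A : Matrix (Fin n) (Fin n) ℝ) : ℝ :=
  if SchurStable A then 0
  else sSup {ω : ℝ | ω ∈ Set.Icc 0 Real.pi ∧
    (Complex.exp (ω * Complex.I) • (1 : Matrix (Fin n) (Fin n) ℂ)
      - A.map Complex.ofReal).det = 0}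

/-- In-degree `d_in(i) = Σ_j a_{ij}`. -/
def dIn {N : ℕ} (a : Fin N → Fin N → ℝ) (i : Fin N) : ℝ := ∑ j, a i j

/-- The Laplacian matrix of the weights `a`. -/
def lapL {N : ℕ} (a : Fin N → Fin N → ℝ) : Matrix (Fin N) (Fin N) ℝ :=
  Matrix.of fun i j => if i = j then dIn a i else -a i j

/-- The expanded Laplacian `L̄ = L + diag(ι)`. -/
def lapLbar {N : ℕ} (a : Fin N → Fin N → ℝ) (ι : Fin N → ℝ) : Matrix (Fin N) (Fin N) ℝ :=
  lapL a + Matrix.diagonal ι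

/-- `D̄ = I − (2I + D_in)⁻¹ L̄`. -/
def DbarM {N : ℕ} (a : Fin N → Fin N → ℝ) (ι : Fin N → ℝ) : Matrix (Fin N) (Fin N) ℝ :=
  1 - ((2 : ℝ) • (1 : Matrix (Fin N) (Fin N) ℝ) + Matrix.diagonal (dIn a))⁻¹ * lapLbar a ι

lemma herm_t {k : ℕ} {M : Matrix (Fin k) (Fin k) ℝ} (h : M.IsHermitian) : Mᵀ = M :=
  (conjTranspose_eq_transpose_of_trivial M).symm.trans h

/-- Quadratic form. -/
def qf {k : ℕ} (P : Matrix (Fin k) (Fin k) ℝ) (x : Fin k → ℝ) : ℝ := x ⬝ᵥ (P *ᵥ x)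

/-- Riccati operator. -/
def ric {n m : ℕ} (A : Matrix (Fin n) (Fin n) ℝ) (B : Matrix (Fin n) (Fin m) ℝ)
    (ε : ℝ) (P : Matrix (Fin n) (Fin n) ℝ) : Matrix (Fin n) (Fin n) ℝ :=
  Aᵀ * P * A - Aᵀ * P * B * (1 + Bᵀ * P * B)⁻¹ * (Bᵀ * P * A)
      + ε • (1 : Matrix (Fin n) (Fin n) ℝ)

lemma qf_conj {k l : ℕ} (P : Matrix (Fin k) (Fin k) ℝ) (X : Matrix (Fin k) (Fin l) ℝ)
    (x : Fin l → ℝ) : qf (Xᵀ * P * X) x = qf P (X *ᵥ x) := by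
  unfold qf
  rw [← mulVec_mulVec, ← mulVec_mulVec, dotProduct_mulVec, vecMul_transpose]

lemma qf_add {k : ℕ} (P Q : Matrix (Fin k) (Fin k) ℝ) (x : Fin k → ℝ) :
    qf (P + Q) x = qf P x + qf Q x := by
  simp [qf, add_mulVec, dotProduct_add]

lemma qf_nonneg {k : ℕ} {P : Matrix (Fin k) (Fin k) ℝ} (h : P.PosSemidef) (x : Fin k → ℝ) :
    0 ≤ qf P x := by
  simpa [qf] using h.dotProduct_mulVec_nonneg x

lemma qf_one {k : ℕ} (x : Fin k → ℝ) : qf 1 x = x ⬝ᵥ x := by simp [qf]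

lemma sq_nonneg' {k : ℕ} (x : Fin k → ℝ) : 0 ≤ x ⬝ᵥ x := by
  simpa using dotProduct_star_self_nonneg x

lemma qf_smul_one {k : ℕ} (ε : ℝ) (x : Fin k → ℝ) :
    qf (ε • (1 : Matrix (Fin k) (Fin k) ℝ)) x = ε * (x ⬝ᵥ x) := by
  simp [qf, smul_mulVec]

lemma posM {n m : ℕ} (B : Matrix (Fin n) (Fin m) ℝ)
    {P : Matrix (Fin n) (Fin n) ℝ} (hP : P.PosSemidef) : (1 + Bᵀ * P * B).PosDef := by
  have h := hP.conjTranspose_mul_mul_same B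
  rw [conjTranspose_eq_transpose_of_trivial] at h
  exact PosDef.one.add_posSemidef h

lemma ric_ident {n m : ℕ} (A : Matrix (Fin n) (Fin n) ℝ) (B : Matrix (Fin n) (Fin m) ℝ)
    (ε : ℝ) {P : Matrix (Fin n) (Fin n) ℝ} (hP : P.PosSemidef) (K : Matrix (Fin m) (Fin n) ℝ) :
    (A - B * K)ᵀ * P * (A - B * K) + Kᵀ * (1 : Matrix (Fin m) (Fin m) ℝ) * K + ε • (1 : Matrix (Fin n) (Fin n) ℝ) =
      ric A B ε P + (K - gainK A B P)ᵀ * (1 + Bᵀ * P * B) * (K - gainK A B P) := by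
  have hPt : Pᵀ = P := herm_t hP.isHermitian
  have hM := posM B hP
  have hu : IsUnit (1 + Bᵀ * P * B).det := (Matrix.isUnit_iff_isUnit_det _).1 hM.isUnit
  have hMt : (1 + Bᵀ * P * B)ᵀ = 1 + Bᵀ * P * B := herm_t hM.isHermitian
  have h1 := Matrix.mul_nonsing_inv _ hu
  have h2 := Matrix.nonsing_inv_mul _ hu
  have hNt : ((1 + Bᵀ * P * B)⁻¹)ᵀ = (1 + Bᵀ * P * B)⁻¹ := by
    rw [transpose_nonsing_inv, hMt]
  unfold ric gainK
  generalize hN : (1 + Bᵀ * P * B)⁻¹ = N at *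
  have e1 : (K - N * (Bᵀ * P * A))ᵀ = Kᵀ - Aᵀ * P * B * N := by
    simp [transpose_mul, hNt, hPt, Matrix.mul_assoc]
  have e2 : (Kᵀ - Aᵀ * P * B * N) * (1 + Bᵀ * P * B) = Kᵀ * (1 + Bᵀ * P * B) - Aᵀ * P * B := by
    rw [Matrix.sub_mul, Matrix.mul_assoc _ N, h2, Matrix.mul_one]
  have e3 : Kᵀ * (1 + Bᵀ * P * B) * (N * (Bᵀ * P * A)) = Kᵀ * (Bᵀ * P * A) := by
    rw [Matrix.mul_assoc, ← Matrix.mul_assoc _ N, h1, Matrix.one_mul]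
  rw [e1, e2, Matrix.sub_mul (Kᵀ * _), Matrix.mul_sub (Kᵀ * _), e3]
  simp only [transpose_sub, transpose_mul, Matrix.sub_mul, Matrix.mul_sub, Matrix.mul_add,
    Matrix.add_mul, Matrix.mul_one, Matrix.mul_assoc]
  abel

lemma ric_qf {n m : ℕ} (A : Matrix (Fin n) (Fin n) ℝ) (B : Matrix (Fin n) (Fin m) ℝ)
    (ε : ℝ) {P : Matrix (Fin n) (Fin n) ℝ} (hP : P.PosSemidef) (K : Matrix (Fin m) (Fin n) ℝ)
    (x : Fin n → ℝ) :
    qf (ric A B ε P) x ≤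
      qf P ((A - B * K) *ᵥ x) + (K *ᵥ x) ⬝ᵥ (K *ᵥ x) + ε * (x ⬝ᵥ x) := by
  have h := congrArg (fun M => qf M x) (ric_ident A B ε hP K)
  simp only [qf_add, qf_conj, qf_one, qf_smul_one] at h
  have := qf_nonneg (posM B hP).posSemidef ((K - gainK A B P) *ᵥ x)
  rw [qf_add, qf_one] at this
  rw [qf_conj] at this
  linarith

lemma ric_qf_eq {n m : ℕ} (A : Matrix (Fin n) (Fin n) ℝ) (B : Matrix (Fin n) (Fin m) ℝ)
    (ε : ℝ) {P : Matrix (Fin n) (Fin n) ℝ} (hP : P.PosSemidef) (x : Fin n → ℝ) :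
    qf (ric A B ε P) x =
      qf P ((A - B * gainK A B P) *ᵥ x) + (gainK A B P *ᵥ x) ⬝ᵥ (gainK A B P *ᵥ x)
        + ε * (x ⬝ᵥ x) := by
  have h := congrArg (fun M => qf M x) (ric_ident A B ε hP (gainK A B P))
  simp only [qf_add, qf_conj, qf_one, qf_smul_one, sub_self, zero_mulVec] at h
  simp at h
  have h0 : qf P 0 = 0 := by simp [qf]
  linarith

lemma ric_psd {n m : ℕ} (A : Matrix (Fin n) (Fin n) ℝ) (B : Matrix (Fin n) (Fin m) ℝ)
    {ε : ℝ} (hε : 0 < ε) {P : Matrix (Fin n) (Fin n) ℝ} (hP : P.PosSemidef) :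
    (ric A B ε P).PosDef := by
  have hPt : Pᵀ = P := herm_t hP.isHermitian
  have hM := posM B hP
  have hMt : (1 + Bᵀ * P * B)ᵀ = 1 + Bᵀ * P * B := herm_t hM.isHermitian
  have hNt : ((1 + Bᵀ * P * B)⁻¹)ᵀ = (1 + Bᵀ * P * B)⁻¹ := by
    rw [transpose_nonsing_inv, hMt]
  refine PosDef.of_dotProduct_mulVec_pos ?_ fun x hx => ?_
  · rw [IsHermitian, conjTranspose_eq_transpose_of_trivial]
    unfold ric
    generalize (1 + Bᵀ * P * B)⁻¹ = N at *
    simp only [transpose_add, transpose_sub, transpose_mul, hNt, hPt, transpose_smul,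
      transpose_one, transpose_transpose, Matrix.mul_assoc]
  · have h := ric_qf_eq A B ε hP x
    have h1 := qf_nonneg hP ((A - B * gainK A B P) *ᵥ x)
    have h2 := sq_nonneg' (gainK A B P *ᵥ x)
    have h3 : 0 < x ⬝ᵥ x := by simpa using dotProduct_star_self_pos_iff.2 hx
    have h4 := mul_pos hε h3
    have : 0 < qf (ric A B ε P) x := by linarith
    simpa [qf] using this

lemma ric_mono {n m : ℕ} (A : Matrix (Fin n) (Fin n) ℝ) (B : Matrix (Fin n) (Fin m) ℝ)
    (ε : ℝ) {P Q : Matrix (Fin n) (Fin n) ℝ} (hP : P.PosSemidef) (hQ : Q.PosSemidef)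
    (h : ∀ x, qf P x ≤ qf Q x) (x : Fin n → ℝ) :
    qf (ric A B ε P) x ≤ qf (ric A B ε Q) x := by
  have h1 := ric_qf A B ε hP (gainK A B Q) x
  rw [ric_qf_eq A B ε hQ x]
  have := h ((A - B * gainK A B Q) *ᵥ x)
  linarith

lemma qf_entry {k : ℕ} {P : Matrix (Fin k) (Fin k) ℝ} (hP : Pᵀ = P) (i j : Fin k) :
    P i j = (qf P (Pi.single i 1 + Pi.single j 1) - qf P (Pi.single i 1)
      - qf P (Pi.single j 1)) / 2 := by
  have : P j i = P i j := by
    conv_lhs => rw [← hP]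
    rfl
  simp [qf, mulVec_add, dotProduct_add, add_dotProduct, this]
  ring

lemma qf_ext {k : ℕ} {P Q : Matrix (Fin k) (Fin k) ℝ} (hP : Pᵀ = P) (hQ : Qᵀ = Q)
    (h : ∀ x, qf P x = qf Q x) : P = Q := by
  ext i j
  rw [qf_entry hP, qf_entry hQ]
  simp only [h]

lemma sol_iff {n m : ℕ} (A : Matrix (Fin n) (Fin n) ℝ) (B : Matrix (Fin n) (Fin m) ℝ)
    (ε : ℝ) (P : Matrix (Fin n) (Fin n) ℝ) :
    IsDARESol A B ε P ↔ P.PosDef ∧ ric A B ε P = P := by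
  unfold IsDARESol ric
  refine and_congr_right fun _ => ?_
  rw [← sub_eq_zero (b := P)]
  have : ∀ a b c d : Matrix (Fin n) (Fin n) ℝ, a - b - c + d = a - c + d - b := by
    intros; abel
  rw [this]

lemma qf_cont {k : ℕ} (P : Matrix (Fin k) (Fin k) ℝ) : Continuous (qf P) := by
  unfold qf
  fun_prop

lemma uniq_le {n m : ℕ} (A : Matrix (Fin n) (Fin n) ℝ) (B : Matrix (Fin n) (Fin m) ℝ)
    {ε : ℝ} (hε : 0 < ε) {P Q : Matrix (Fin n) (Fin n) ℝ} (hP : P.PosSemidef)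
    (hQ : Q.PosSemidef) (eP : ric A B ε P = P) (eQ : ric A B ε Q = Q) (x : Fin n → ℝ) :
    qf Q x ≤ qf P x := by
  set F := A - B * gainK A B P with hF
  let y : ℕ → Fin n → ℝ := fun k => (F ^ k) *ᵥ x
  have y0 : y 0 = x := by simp [y]
  have ys : ∀ k, y (k + 1) = F *ᵥ y k := by
    intro k; simp [y, pow_succ', mulVec_mulVec]
  have e1 : ∀ z, qf P z = qf P (F *ᵥ z) + (gainK A B P *ᵥ z) ⬝ᵥ (gainK A B P *ᵥ z)
        + ε * (z ⬝ᵥ z) := by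
    intro z
    have := ric_qf_eq A B ε hP z
    rwa [eP] at this
  have e2 : ∀ z, qf Q z ≤ qf Q (F *ᵥ z) + (gainK A B P *ᵥ z) ⬝ᵥ (gainK A B P *ᵥ z)
        + ε * (z ⬝ᵥ z) := by
    intro z
    have := ric_qf A B ε hQ (gainK A B P) z
    rwa [eQ] at this
  have hsum : ∀ N, ∑ k ∈ Finset.range N, ε * (y k ⬝ᵥ y k) ≤ qf P x - qf P (y N) := by
    intro N
    induction N with
    | zero => simp [y0]
    | succ N ih =>
      rw [Finset.sum_range_succ, ys]
      have := e1 (y N)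
      have := sq_nonneg' (gainK A B P *ᵥ y N)
      linarith
  have hs : Summable fun k => ε * (y k ⬝ᵥ y k) := by
    refine summable_of_sum_range_le (c := qf P x) (fun k => ?_) fun N => ?_
    · exact mul_nonneg hε.le (sq_nonneg' _)
    · have := hsum N
      have := qf_nonneg hP (y N)
      linarith
  have ht : Tendsto (fun k => y k ⬝ᵥ y k) atTop (𝓝 0) := by
    have := hs.tendsto_atTop_zero.const_mul ε⁻¹
    simpa [← mul_assoc, inv_mul_cancel₀ hε.ne'] using this
  have hy : Tendsto y atTop (𝓝 0) := by
    rw [tendsto_pi_nhds]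
    intro i
    have h1 : Tendsto (fun k => |y k i|) atTop (𝓝 0) := by
      have h2 : Tendsto (fun k => √(y k ⬝ᵥ y k)) atTop (𝓝 0) := by
        simpa using ht.sqrt
      refine squeeze_zero (fun _ => abs_nonneg _) (fun k => ?_) h2
      apply Real.abs_le_sqrt
      rw [sq]
      exact Finset.single_le_sum (f := fun i => y k i * y k i)
        (fun j _ => mul_self_nonneg _) (Finset.mem_univ i)
    exact (tendsto_zero_iff_abs_tendsto_zero _).2 h1
  have hk : ∀ k, qf Q x - qf P x ≤ qf Q (y k) - qf P (y k) := by
    intro k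
    induction k with
    | zero => simp [y0]
    | succ k ih =>
      rw [ys]
      have := e1 (y k)
      have := e2 (y k)
      linarith
  have hl : Tendsto (fun k => qf Q (y k) - qf P (y k)) atTop (𝓝 0) := by
    have := ((qf_cont Q).sub (qf_cont P)).continuousAt.tendsto.comp hy
    simpa [qf, Function.comp_def] using this
  have := ge_of_tendsto' hl hk
  linarith

lemma schur_decay {n : ℕ} {F : Matrix (Fin n) (Fin n) ℝ} (hF : SchurStable F) :
    ∃ r : ℝ, 0 ≤ r ∧ r < 1 ∧ ∀ (x : Fin n → ℝ) (a : Fin n),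
      (fun j : ℕ => ((F ^ j) *ᵥ x) a) =O[atTop] fun j => r ^ j := by
  rcases Nat.eq_zero_or_pos n with h0 | hn
  · subst h0
    exact ⟨0, le_rfl, one_pos, fun _ a => a.elim0⟩
  have : Nonempty (Fin n) := ⟨⟨0, hn⟩⟩
  let _ : NormedRing (Matrix (Fin n) (Fin n) ℂ) := Matrix.linftyOpNormedRing
  let _ : NormedAlgebra ℂ (Matrix (Fin n) (Fin n) ℂ) := Matrix.linftyOpNormedAlgebra
  have : CompleteSpace (Matrix (Fin n) (Fin n) ℂ) := FiniteDimensional.complete ℂ _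
  set G : Matrix (Fin n) (Fin n) ℂ := F.map Complex.ofReal with hG
  have hr : spectralRadius ℂ G < (1 : NNReal) :=
    spectrum.spectralRadius_lt_of_forall_lt G fun k hk => by
      have := hF k hk
      exact_mod_cast this
  obtain ⟨r, hr1, hr2⟩ := ENNReal.lt_iff_exists_nnreal_btwn.1 hr
  have hg := (spectrum.pow_nnnorm_pow_one_div_tendsto_nhds_spectralRadius G).eventually_lt_const hr1
  refine ⟨r, r.2, by exact_mod_cast hr2, fun x a => ?_⟩
  let xc : Fin n → ℂ := fun i => (x i : ℂ)
  refine Asymptotics.IsBigO.of_bound ‖xc‖ ?_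
  filter_upwards [hg, eventually_gt_atTop 0] with j hj hj0
  have h1 : ‖G ^ j‖₊ ≤ r ^ j := by
    have h2 : ((‖G ^ j‖₊ : ENNReal) ^ (1 / (j : ℝ))) ^ (j : ℝ) ≤ (r : ENNReal) ^ (j : ℝ) :=
      ENNReal.rpow_le_rpow hj.le (by positivity)
    rw [← ENNReal.rpow_mul, one_div, inv_mul_cancel₀ (by positivity), ENNReal.rpow_one,
      ENNReal.rpow_natCast] at h2
    exact_mod_cast h2
  have h1' : ‖G ^ j‖ ≤ (r : ℝ) ^ j := by exact_mod_cast h1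
  have h3 : ((((F ^ j) *ᵥ x) a : ℝ) : ℂ) = ((G ^ j) *ᵥ xc) a := by
    have : G ^ j = (F ^ j).map Complex.ofReal := by
      have := map_pow (Complex.ofRealHom.mapMatrix (m := Fin n)) F j
      exact this.symm
    rw [this]
    simp [mulVec, dotProduct, xc]
  rw [← Complex.norm_real, h3]
  calc ‖((G ^ j) *ᵥ xc) a‖ ≤ ‖(G ^ j) *ᵥ xc‖ := norm_le_pi_norm _ a
    _ ≤ ‖G ^ j‖ * ‖xc‖ := linfty_opNorm_mulVec _ _
    _ ≤ (r : ℝ) ^ j * ‖xc‖ := by gcongr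
    _ = ‖xc‖ * ‖(r : ℝ) ^ j‖ := by
      rw [Real.norm_of_nonneg (by positivity), mul_comm]

lemma schur_summable {n l : ℕ} {F : Matrix (Fin n) (Fin n) ℝ} (hF : SchurStable F)
    (K : Matrix (Fin l) (Fin n) ℝ) (x : Fin n → ℝ) :
    Summable fun j : ℕ => (K *ᵥ ((F ^ j) *ᵥ x)) ⬝ᵥ (K *ᵥ ((F ^ j) *ᵥ x)) := by
  obtain ⟨r, h0, h1, h⟩ := schur_decay hF
  have hb : ∀ a, (fun j : ℕ => (K *ᵥ ((F ^ j) *ᵥ x)) a) =O[atTop] fun j => r ^ j := by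
    intro a
    simp only [mulVec, dotProduct]
    exact Asymptotics.IsBigO.fun_sum fun i _ => (h x i).const_mul_left _
  refine summable_of_isBigO_nat (g := fun j : ℕ => (r * r) ^ j)
    (summable_geometric_of_lt_one (by positivity) (by nlinarith)) ?_
  simp only [dotProduct, mul_pow]
  exact Asymptotics.IsBigO.fun_sum fun i _ => (hb i).mul (hb i)

lemma exists_sol {n m : ℕ} (A : Matrix (Fin n) (Fin n) ℝ) (B : Matrix (Fin n) (Fin m) ℝ)
    (hstab : Stabilizable A B) {ε : ℝ} (hε : 0 < ε) :
    ∃ P : Matrix (Fin n) (Fin n) ℝ, P.PosDef ∧ ric A B ε P = P := by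
  obtain ⟨K, hK⟩ := hstab
  set F := A - B * K with hF
  let S : ℕ → Matrix (Fin n) (Fin n) ℝ := fun k => (ric A B ε)^[k] 0
  have S0 : S 0 = 0 := rfl
  have Ss : ∀ k, S (k + 1) = ric A B ε (S k) := fun k => Function.iterate_succ_apply' _ _ _
  have hS : ∀ k, (S k).PosSemidef := by
    intro k
    induction k with
    | zero => rw [S0]; exact PosSemidef.zero
    | succ k ih => rw [Ss]; exact (ric_psd A B hε ih).posSemidef
  have hSt : ∀ k, (S k)ᵀ = S k := fun k => herm_t (hS k).isHermitian
  have hmono : ∀ k x, qf (S k) x ≤ qf (S (k + 1)) x := by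
    intro k
    induction k with
    | zero => intro x; simpa [S0, qf] using qf_nonneg (hS 1) x
    | succ k ih =>
      intro x
      rw [Ss, Ss (k + 1)]
      exact ric_mono A B ε (hS k) (hS (k + 1)) ih x
  let c : (Fin n → ℝ) → ℝ := fun z => (K *ᵥ z) ⬝ᵥ (K *ᵥ z) + ε * (z ⬝ᵥ z)
  have hc0 : ∀ z, 0 ≤ c z := fun z => add_nonneg (sq_nonneg' _) (mul_nonneg hε.le (sq_nonneg' _))
  have hsum : ∀ x, Summable fun j : ℕ => c ((F ^ j) *ᵥ x) := by
    intro x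
    have h1 := schur_summable hK K x
    have h2 := schur_summable hK (1 : Matrix (Fin n) (Fin n) ℝ) x
    simp only [one_mulVec] at h2
    exact h1.add (h2.mul_left ε)
  have hle : ∀ k x, qf (S k) x ≤ ∑ j ∈ Finset.range k, c ((F ^ j) *ᵥ x) := by
    intro k
    induction k with
    | zero => intro x; simp [S0, qf]
    | succ k ih =>
      intro x
      rw [Ss, Finset.sum_range_succ']
      have h1 := ric_qf A B ε (hS k) K x
      have h2 := ih (F *ᵥ x)
      simp only [mulVec_mulVec, ← pow_succ] at h2
      simp only [pow_zero, one_mulVec]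
      have h3 : c x = (K *ᵥ x) ⬝ᵥ (K *ᵥ x) + ε * (x ⬝ᵥ x) := rfl
      linarith
  have hconv : ∀ x, ∃ l, Tendsto (fun k => qf (S k) x) atTop (𝓝 l) := by
    intro x
    refine ⟨_, tendsto_atTop_ciSup (monotone_nat_of_le_succ fun k => hmono k x)
      ⟨∑' j, c ((F ^ j) *ᵥ x), ?_⟩⟩
    rintro _ ⟨k, rfl⟩
    exact (hle k x).trans ((hsum x).sum_le_tsum _ fun _ _ => hc0 _)
  choose ℓ hℓ using hconv
  let L : Matrix (Fin n) (Fin n) ℝ := Matrix.of fun i j =>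
    (ℓ (Pi.single i 1 + Pi.single j 1) - ℓ (Pi.single i 1) - ℓ (Pi.single j 1)) / 2
  have hL : Tendsto S atTop (𝓝 L) := by
    refine tendsto_pi_nhds.2 fun i => tendsto_pi_nhds.2 fun j => ?_
    have : (fun k => S k i j) = fun k => (qf (S k) (Pi.single i 1 + Pi.single j 1)
        - qf (S k) (Pi.single i 1) - qf (S k) (Pi.single j 1)) / 2 :=
      funext fun k => qf_entry (hSt k) i j
    rw [this]
    exact (((hℓ _).sub (hℓ _)).sub (hℓ _)).div_const 2
  have hLt : Lᵀ = L := by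
    have h1 : Tendsto (fun k => (S k)ᵀ) atTop (𝓝 Lᵀ) :=
      (continuous_id.matrix_transpose.tendsto L).comp hL
    simp only [hSt] at h1
    exact tendsto_nhds_unique h1 hL
  have hLp : L.PosSemidef := by
    refine PosSemidef.of_dotProduct_mulVec_nonneg (by simpa [IsHermitian] using hLt) fun x => ?_
    have hcq : Continuous fun P : Matrix (Fin n) (Fin n) ℝ => qf P x := by
      unfold qf; fun_prop
    have := ge_of_tendsto' ((hcq.tendsto L).comp hL) (fun k => qf_nonneg (hS k) x)
    simpa [qf] using this
  have hcont : ContinuousAt (ric A B ε) L := by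
    have hu : (1 + Bᵀ * L * B).det ≠ 0 :=
      ((Matrix.isUnit_iff_isUnit_det _).1 (posM B hLp).isUnit).ne_zero
    have hi : ContinuousAt (fun P : Matrix (Fin n) (Fin n) ℝ => (1 + Bᵀ * P * B)⁻¹) L := by
      have h1 : ContinuousAt (Inv.inv : Matrix (Fin m) (Fin m) ℝ → _) (1 + Bᵀ * L * B) := by
        apply continuousAt_matrix_inv
        rw [Ring.inverse_eq_inv']
        exact continuousAt_inv₀ hu
      exact ContinuousAt.comp (f := fun P : Matrix (Fin n) (Fin n) ℝ => 1 + Bᵀ * P * B) h1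
        (by fun_prop)
    unfold ric
    refine ContinuousAt.add (ContinuousAt.sub (by fun_prop) ?_) continuousAt_const
    have h2 : ContinuousAt (fun P : Matrix (Fin n) (Fin n) ℝ => Aᵀ * P * B) L := by fun_prop
    have h3 : ContinuousAt (fun P : Matrix (Fin n) (Fin n) ℝ => Bᵀ * P * A) L := by fun_prop
    exact ((continuous_fst.matrix_mul continuous_snd).continuousAt.comp
      ((((continuous_fst.matrix_mul continuous_snd).continuousAt).comp (h2.prodMk hi)).prodMk h3))
  have hfix : ric A B ε L = L := by
    have h1 : Tendsto (fun k => S (k + 1)) atTop (𝓝 (ric A B ε L)) := by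
      simp only [Ss]
      exact hcont.tendsto.comp hL
    exact tendsto_nhds_unique h1 (hL.comp (tendsto_add_atTop_nat 1))
  exact ⟨L, hfix ▸ ric_psd A B hε hLp, hfix⟩

/-- for every `ε > 0` the discrete algebraic Riccati equation
`AᵀPA − P − AᵀPB(I + BᵀPB)⁻¹BᵀPA + εI = 0` has a unique positive definite solution. -/
theorem dare_unique_posdef_solution {n m : ℕ}
    (A : Matrix (Fin n) (Fin n) ℝ) (B : Matrix (Fin n) (Fin m) ℝ)
    (hstab : Stabilizable A B) (hA : EigInClosedUnitDisc A)
    (ε : ℝ) (hε : 0 < ε) :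
    ∃! P : Matrix (Fin n) (Fin n) ℝ, IsDARESol A B ε P := by
  obtain ⟨P, hP, eP⟩ := exists_sol A B hstab hε
  refine ⟨P, (sol_iff A B ε P).2 ⟨hP, eP⟩, fun Q hQ => ?_⟩
  obtain ⟨hQ, eQ⟩ := (sol_iff A B ε Q).1 hQ
  have hPs := hP.posSemidef
  have hQs := hQ.posSemidef
  refine qf_ext (herm_t hQ.isHermitian) (herm_t hP.isHermitian) fun x => ?_
  exact le_antisymm (uniq_le A B hε hPs hQs eP eQ x) (uniq_le A B hε hQs hPs eQ eP x)
end
end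

section
/- Let A ∈ ℝ^{n×n}, B ∈ ℝ^{n×m} with (A,B) stabilizable and all eigenvalues of A in the closed unit disc. For ε > 0 let P_ε be the unique positive definite solution of the discrete algebraic Riccati equation AᵀP A − P − AᵀP B (I + BᵀP B)^{−1} BᵀP A + εI = 0, and let K_ε := (I + BᵀP_ε B)^{−1} BᵀP_ε A. Then P_ε → 0 and K_ε → 0 as ε → 0⁺; in particular, for every μ > 0 there exists ε* > 0 such that ‖B K_ε‖ ≤ μ for all ε ∈ (0, ε*]. -/
open Matrix Filter Topology Kronecker
open scoped Classical

noncomputable section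

lemma aux_pow_tendsto {A : Type*} [NormedRing A] [NormedAlgebra ℂ A] [CompleteSpace A] (a : A)
    (h : spectralRadius ℂ a < 1) : Tendsto (fun N : ℕ => a ^ N) atTop (𝓝 0) := by
  obtain ⟨r, hr1, hr2⟩ := ENNReal.lt_iff_exists_nnreal_btwn.mp h
  have hr2' : r < 1 := by exact_mod_cast hr2
  have h1 := (spectrum.pow_nnnorm_pow_one_div_tendsto_nhds_spectralRadius a).eventually_lt_const hr1
  rw [tendsto_zero_iff_norm_tendsto_zero]
  refine squeeze_zero' (Eventually.of_forall fun _ => norm_nonneg _) ?_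
    (tendsto_pow_atTop_nhds_zero_of_lt_one r.2 (by exact_mod_cast hr2'))
  filter_upwards [h1, eventually_gt_atTop 0] with N hN hN0
  have hN0' : (0 : ℝ) < N := by exact_mod_cast hN0
  have h2 : ((‖a ^ N‖₊ : ENNReal) ^ (1 / N : ℝ)) ^ (N : ℝ) ≤ (r : ENNReal) ^ (N : ℝ) :=
    ENNReal.rpow_le_rpow hN.le hN0'.le
  rw [← ENNReal.rpow_mul, one_div_mul_cancel hN0'.ne', ENNReal.rpow_one, ENNReal.rpow_natCast] at h2
  exact_mod_cast h2

lemma aux_schur_pow_C {n : ℕ} (F : Matrix (Fin n) (Fin n) ℂ) (hF : ∀ μ ∈ spectrum ℂ F, ‖μ‖ < 1) :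
    Tendsto (fun N : ℕ => F ^ N) atTop (𝓝 0) := by
  rcases Nat.eq_zero_or_pos n with rfl | hn
  · have : (fun N : ℕ => F ^ N) = fun _ => 0 := by
      funext N; exact Subsingleton.elim _ _
    rw [this]; exact tendsto_const_nhds
  · have : Nonempty (Fin n) := ⟨⟨0, hn⟩⟩
    let : NormedRing (Matrix (Fin n) (Fin n) ℂ) := Matrix.linftyOpNormedRing
    let : NormedAlgebra ℂ (Matrix (Fin n) (Fin n) ℂ) := Matrix.linftyOpNormedAlgebra
    have : CompleteSpace (Matrix (Fin n) (Fin n) ℂ) := FiniteDimensional.complete ℂ _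
    apply aux_pow_tendsto F
    apply spectrum.spectralRadius_lt_of_forall_lt
    intro z hz
    exact_mod_cast hF z hz

lemma aux_schur_pow {n : ℕ} (F : Matrix (Fin n) (Fin n) ℝ) (hF : SchurStable F) :
    Tendsto (fun N : ℕ => F ^ N) atTop (𝓝 0) := by
  have h := aux_schur_pow_C (F.map Complex.ofReal) hF
  have e : ∀ N : ℕ, F ^ N = ((F.map Complex.ofReal) ^ N).map Complex.re := by
    intro N
    have : (F.map Complex.ofReal) ^ N = (F ^ N).map Complex.ofReal := by
      have := map_pow (Complex.ofRealHom.mapMatrix (m := Fin n)) F N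
      exact this.symm
    rw [this]; ext i j; simp
  simp_rw [e]
  have c : Continuous (fun M : Matrix (Fin n) (Fin n) ℂ => M.map Complex.re) :=
    continuous_id.matrix_map Complex.continuous_re
  have := (c.tendsto 0).comp h
  simpa [Function.comp_def] using this

lemma aux_mem_spec {n : ℕ} (M : Matrix (Fin n) (Fin n) ℂ) (w : Fin n → ℂ) (ν : ℂ) (hw : w ≠ 0)
    (h : M *ᵥ w = ν • w) : ν ∈ spectrum ℂ M := by
  rw [← Matrix.spectrum_toLin', ← Module.End.hasEigenvalue_iff_mem_spectrum]
  exact Module.End.hasEigenvalue_of_hasEigenvector (x := w)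
    ⟨Module.End.mem_eigenspace_iff.mpr (by simpa using h), hw⟩

lemma aux_mem_spec_star {n : ℕ} (M : Matrix (Fin n) (Fin n) ℂ) (w : Fin n → ℂ) (ν : ℂ) (hw : w ≠ 0)
    (h : Mᴴ *ᵥ w = ν • w) : star ν ∈ spectrum ℂ M := by
  have := aux_mem_spec _ w ν hw h
  rw [← Matrix.star_eq_conjTranspose, spectrum.map_star] at this
  simpa using this

lemma aux_dot {k : ℕ} (v : Fin k → ℂ) : star v ⬝ᵥ v = ((∑ i, ‖v i‖ ^ 2 : ℝ) : ℂ) := by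
  simp only [dotProduct, Pi.star_apply, Complex.ofReal_sum]
  refine Finset.sum_congr rfl fun i _ => ?_
  have := Complex.conj_mul' (v i)
  simpa using this

open scoped ComplexOrder in
lemma aux_core {n m : ℕ} (A C : Matrix (Fin n) (Fin n) ℂ) (B : Matrix (Fin n) (Fin m) ℂ)
    (P Ac : Matrix (Fin n) (Fin n) ℂ) (K F : Matrix (Fin m) (Fin n) ℂ) (hC : P = Cᴴ * C)
    (hAc : Ac = A - B * K) (hK : K = Bᴴ * P * Ac) (hR : P = Aᴴ * P * Ac)
    (hA : ∀ μ ∈ spectrum ℂ A, ‖μ‖ ≤ 1) (hF : ∀ μ ∈ spectrum ℂ (A - B * F), ‖μ‖ < 1) : P = 0 := by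
  by_contra hP
  set V := LinearMap.range P.mulVecLin with hV
  set T := Aᴴ.mulVecLin with hT
  have hle : V ≤ V.map T := by
    rintro _ ⟨x, rfl⟩
    refine ⟨P *ᵥ (Ac *ᵥ x), ⟨Ac *ᵥ x, rfl⟩, ?_⟩
    simp only [hT, Matrix.mulVecLin_apply, Matrix.mulVec_mulVec, ← Matrix.mul_assoc]
    rw [← hR]
  have hVeq : V = V.map T := Submodule.eq_of_le_of_finrank_le hle (Submodule.finrank_map_le T V)
  have hmaps : ∀ x ∈ V, T x ∈ V := fun x hx => by
    rw [hVeq]; exact Submodule.mem_map_of_mem hx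
  set TV := T.restrict hmaps with hTV
  have hsurj : Function.Surjective TV := by
    rintro ⟨y, hy⟩
    rw [hVeq] at hy
    obtain ⟨x, hx, rfl⟩ := hy
    exact ⟨⟨x, hx⟩, rfl⟩
  have hinj : Function.Injective TV := LinearMap.injective_iff_surjective.mpr hsurj
  have hVne : Nontrivial V := by
    rw [Submodule.nontrivial_iff_ne_bot]
    intro hbot
    apply hP
    rw [hV, LinearMap.range_eq_bot] at hbot
    refine Matrix.ext_of_mulVec_single fun i => ?_
    have := LinearMap.congr_fun hbot (Pi.single i 1)
    exact this.trans (Matrix.zero_mulVec _).symm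
  obtain ⟨ν, hν⟩ := Module.End.exists_eigenvalue TV
  obtain ⟨⟨w, hwV⟩, hw⟩ := hν.exists_hasEigenvector
  have hw0 : w ≠ 0 := fun h => hw.2 (by ext1; exact h)
  have hTw : Aᴴ *ᵥ w = ν • w := congrArg Subtype.val hw.apply_eq_smul
  have hν0 : ν ≠ 0 := by
    rintro rfl
    apply hw.2
    apply hinj
    rw [hw.apply_eq_smul]; simp
  have hν1 : ‖ν‖ ≤ 1 := by
    have := hA _ (aux_mem_spec_star A w ν hw0 hTw)
    simpa using this
  obtain ⟨x, hx⟩ := hwV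
  replace hx : P *ᵥ x = w := hx
  have h1 : P *ᵥ (Ac *ᵥ x) = ν⁻¹ • w := by
    have hmem1 : P *ᵥ (Ac *ᵥ x) ∈ V := ⟨_, rfl⟩
    have hmem2 : ν⁻¹ • w ∈ V := V.smul_mem _ ⟨x, hx⟩
    have : (⟨_, hmem1⟩ : V) = ⟨_, hmem2⟩ := by
      apply hinj
      ext1
      change Aᴴ *ᵥ (P *ᵥ (Ac *ᵥ x)) = Aᴴ *ᵥ (ν⁻¹ • w)
      rw [Matrix.mulVec_smul, hTw, smul_smul, inv_mul_cancel₀ hν0, one_smul, Matrix.mulVec_mulVec,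
        Matrix.mulVec_mulVec, ← hR, hx]
    exact congrArg Subtype.val this
  have hCx : C *ᵥ (Ac *ᵥ x) = ν⁻¹ • (C *ᵥ x) := by
    have : (Cᴴ * C) *ᵥ (Ac *ᵥ x - ν⁻¹ • x) = 0 := by
      rw [← hC, Matrix.mulVec_sub, Matrix.mulVec_smul, h1, hx, sub_self]
    rw [Matrix.conjTranspose_mul_self_mulVec_eq_zero, Matrix.mulVec_sub, Matrix.mulVec_smul] at this
    exact sub_eq_zero.mp this
  have hPH : Pᴴ = P := by rw [hC]; simp
  have hid : P = Acᴴ * P * Ac + Kᴴ * K := by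
    have e1 : A = Ac + B * K := by rw [hAc]; abel
    have e2 : Aᴴ = Acᴴ + Kᴴ * Bᴴ := by rw [e1]; simp
    calc P = Aᴴ * P * Ac := hR
      _ = Acᴴ * P * Ac + Kᴴ * (Bᴴ * P * Ac) := by rw [e2]; simp only [Matrix.add_mul, Matrix.mul_assoc]
      _ = _ := by rw [← hK]
  have hq : star (C *ᵥ x) ⬝ᵥ (C *ᵥ x) = star (C *ᵥ (Ac *ᵥ x)) ⬝ᵥ (C *ᵥ (Ac *ᵥ x))
      + star (K *ᵥ x) ⬝ᵥ (K *ᵥ x) := by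
    have := congrArg (fun M => star x ⬝ᵥ (M *ᵥ x)) hid
    rw [hC] at this
    simpa only [Matrix.star_mulVec, Matrix.dotProduct_mulVec, Matrix.vecMul_vecMul,
      Matrix.vecMul_add, add_dotProduct, Matrix.mul_assoc, Matrix.add_mulVec, dotProduct_add]
      using this
  rw [hCx, aux_dot, aux_dot, aux_dot] at hq
  have hq' : (∑ i, ‖(C *ᵥ x) i‖ ^ 2) = ‖ν⁻¹‖ ^ 2 * (∑ i, ‖(C *ᵥ x) i‖ ^ 2)
      + ∑ i, ‖(K *ᵥ x) i‖ ^ 2 := by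
    have : (∑ i, ‖(C *ᵥ x) i‖ ^ 2) = (∑ i, ‖(ν⁻¹ • (C *ᵥ x)) i‖ ^ 2)
      + ∑ i, ‖(K *ᵥ x) i‖ ^ 2 := by exact_mod_cast hq
    simpa only [Pi.smul_apply, norm_smul, mul_pow, ← Finset.mul_sum] using this
  have hcpos : 0 < ∑ i, ‖(C *ᵥ x) i‖ ^ 2 := by
    have hne : C *ᵥ x ≠ 0 := by
      intro h
      apply hw0
      rw [← hx, hC, ← Matrix.mulVec_mulVec, h, Matrix.mulVec_zero]
    obtain ⟨i, hi⟩ := Function.ne_iff.mp hne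
    refine Finset.sum_pos' (fun _ _ => by positivity) ⟨i, Finset.mem_univ _, ?_⟩
    have : 0 < ‖(C *ᵥ x) i‖ := norm_pos_iff.mpr hi
    positivity
  have hknn : 0 ≤ ∑ i, ‖(K *ᵥ x) i‖ ^ 2 := Finset.sum_nonneg fun _ _ => by positivity
  have hνpos : 0 < ‖ν‖ := norm_pos_iff.mpr hν0
  have hinv1 : 1 ≤ ‖ν⁻¹‖ := by
    rw [norm_inv]; exact (one_le_inv₀ hνpos).mpr hν1
  have hinv2 : 1 ≤ ‖ν⁻¹‖ ^ 2 := one_le_pow₀ hinv1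
  have hk0 : ∑ i, ‖(K *ᵥ x) i‖ ^ 2 = 0 := by nlinarith
  have hinv3 : ‖ν⁻¹‖ ^ 2 = 1 := by
    have : (‖ν⁻¹‖ ^ 2 - 1) * ∑ i, ‖(C *ᵥ x) i‖ ^ 2 = 0 := by linarith
    rcases mul_eq_zero.mp this with h | h
    · linarith
    · exact absurd h hcpos.ne'
  have hνn : ‖ν‖ = 1 := by
    have : ‖ν⁻¹‖ = 1 := by nlinarith
    rw [norm_inv] at this
    exact inv_eq_one.mp this
  have hKx : K *ᵥ x = 0 := by
    funext i
    have := (Finset.sum_eq_zero_iff_of_nonneg (fun i _ => by positivity)).mp hk0 i (Finset.mem_univ _)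
    simpa using this
  have hBw : Bᴴ *ᵥ w = 0 := by
    have : (Bᴴ * P * Ac) *ᵥ x = 0 := by rw [← hK]; exact hKx
    rw [Matrix.mul_assoc, ← Matrix.mulVec_mulVec, ← Matrix.mulVec_mulVec, h1,
      Matrix.mulVec_smul] at this
    exact (smul_eq_zero.mp this).resolve_left (inv_ne_zero hν0)
  have hfin : (A - B * F)ᴴ *ᵥ w = ν • w := by
    rw [Matrix.conjTranspose_sub, Matrix.conjTranspose_mul, Matrix.sub_mulVec,
      ← Matrix.mulVec_mulVec, hBw, hTw]; simp
  have := hF _ (aux_mem_spec_star _ w ν hw0 hfin)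
  rw [norm_star, hνn] at this
  exact lt_irrefl _ this

lemma aux_R {n m : ℕ} {P : Matrix (Fin n) (Fin n) ℝ} (hP : P.PosSemidef)
    (B : Matrix (Fin n) (Fin m) ℝ) : (1 + Bᵀ * P * B).PosDef := by
  have := hP.conjTranspose_mul_mul_same B
  rw [Matrix.conjTranspose_eq_transpose_of_trivial] at this
  exact Matrix.PosDef.one.add_posSemidef this

lemma aux_RK {n m : ℕ} {P : Matrix (Fin n) (Fin n) ℝ} (hP : P.PosSemidef)
    (A : Matrix (Fin n) (Fin n) ℝ) (B : Matrix (Fin n) (Fin m) ℝ) :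
    (1 + Bᵀ * P * B) * gainK A B P = Bᵀ * P * A := by
  have h : IsUnit (1 + Bᵀ * P * B).det := (Matrix.isUnit_iff_isUnit_det _).mp (aux_R hP B).isUnit
  rw [gainK, ← Matrix.mul_assoc, Matrix.mul_nonsing_inv _ h, Matrix.one_mul]

lemma aux_ineq {n m : ℕ} {P : Matrix (Fin n) (Fin n) ℝ} {ε : ℝ}
    (A : Matrix (Fin n) (Fin n) ℝ) (B : Matrix (Fin n) (Fin m) ℝ) (h : IsDARESol A B ε P)
    (K' : Matrix (Fin m) (Fin n) ℝ) :
    ((A - B * K')ᵀ * P * (A - B * K') + (K'ᵀ * K' + ε • 1) - P).PosSemidef := by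
  have hP := h.1.posSemidef
  have hPT : Pᵀ = P := by
    have := hP.1.eq
    rwa [Matrix.conjTranspose_eq_transpose_of_trivial] at this
  have hRK := aux_RK hP A B
  have hR := aux_R hP B
  have hE := h.2
  rw [Matrix.mul_assoc (Aᵀ * P * B) _ _] at hE
  change Aᵀ * P * A - P - Aᵀ * P * B * gainK A B P + ε • (1 : Matrix (Fin n) (Fin n) ℝ) = 0 at hE
  set K := gainK A B P with hK
  have hKR : Kᵀ * (1 + Bᵀ * P * B) = Aᵀ * P * B := by
    have := congrArg Matrix.transpose hRK
    simpa [Matrix.transpose_mul, hPT, Matrix.mul_assoc] using this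
  have key : (A - B * K')ᵀ * P * (A - B * K') + (K'ᵀ * K' + ε • 1) - P
      = (K' - K)ᵀ * (1 + Bᵀ * P * B) * (K' - K) := by
    have e1 : (K' - K)ᵀ * (1 + Bᵀ * P * B) * (K' - K) = K'ᵀ * (1 + Bᵀ * P * B) * K'
        - K'ᵀ * ((1 + Bᵀ * P * B) * K) - (Kᵀ * (1 + Bᵀ * P * B)) * K'
        + (Kᵀ * (1 + Bᵀ * P * B)) * K := by
      generalize (1 + Bᵀ * P * B) = R
      simp only [Matrix.transpose_sub, Matrix.sub_mul, Matrix.mul_sub, Matrix.mul_assoc]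
      abel
    have e2 : P = Aᵀ * P * A - Aᵀ * P * B * K + ε • 1 := by
      rw [← sub_eq_zero, ← neg_eq_zero, ← hE]; abel
    rw [e1, hRK, hKR]
    conv_lhs => rw [sub_eq_add_neg]; arg 2; rw [e2]
    simp only [Matrix.transpose_sub, Matrix.transpose_mul, Matrix.sub_mul, Matrix.mul_sub,
      Matrix.mul_assoc, Matrix.mul_add, Matrix.add_mul, Matrix.one_mul]
    abel
  rw [key]
  have := hR.posSemidef.conjTranspose_mul_mul_same (K' - K)
  rwa [Matrix.conjTranspose_eq_transpose_of_trivial] at this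

lemma aux_entry {n : ℕ} {P : Matrix (Fin n) (Fin n) ℝ} (hP : P.PosSemidef) (i j : Fin n) :
    |P i j| ≤ P.trace := by
  have hd : ∀ k, 0 ≤ P k k := fun k => hP.diag_nonneg
  have hsym : P j i = P i j := by
    have := hP.1.apply i j
    simpa using this
  by_cases hij : i = j
  · subst hij
    rw [abs_of_nonneg (hd i)]
    exact Finset.single_le_sum (f := fun k => P k k) (fun k _ => hd k) (Finset.mem_univ i)
  · have htr : P i i + P j j ≤ P.trace := by
      have := Finset.sum_le_sum_of_subset_of_nonneg (f := fun k => P k k)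
        (Finset.subset_univ ({i, j} : Finset (Fin n))) (fun k _ _ => hd k)
      rw [Finset.sum_pair hij] at this
      exact this
    have h1 := hP.dotProduct_mulVec_nonneg (Pi.single i 1 + Pi.single j 1)
    have h2 := hP.dotProduct_mulVec_nonneg (Pi.single i 1 - Pi.single j 1)
    simp [Matrix.mulVec_add, Matrix.mulVec_sub, hsym] at h1 h2
    have := hd i
    have := hd j
    rw [abs_le]
    constructor <;> linarith

lemma aux_iter {n : ℕ} (F Q : Matrix (Fin n) (Fin n) ℝ) (N : ℕ) :
    ∃ S : Matrix (Fin n) (Fin n) ℝ, ∀ P : Matrix (Fin n) (Fin n) ℝ,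
      (Fᵀ * P * F + Q - P).PosSemidef → ((F ^ N)ᵀ * P * F ^ N + S - P).PosSemidef := by
  induction N with
  | zero => exact ⟨0, fun P _ => by simpa using Matrix.PosSemidef.zero⟩
  | succ N ih =>
    obtain ⟨S, hS⟩ := ih
    refine ⟨S + (F ^ N)ᵀ * Q * F ^ N, fun P h => ?_⟩
    have h1 := hS P h
    have h2 := h.conjTranspose_mul_mul_same (F ^ N)
    rw [Matrix.conjTranspose_eq_transpose_of_trivial] at h2
    convert h1.add h2 using 1
    rw [pow_succ', Matrix.transpose_mul]
    simp only [Matrix.mul_sub, Matrix.sub_mul, Matrix.mul_add, Matrix.add_mul, Matrix.mul_assoc]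
    abel

lemma aux_bound {n : ℕ} (F Q : Matrix (Fin n) (Fin n) ℝ) (hF : SchurStable F) :
    ∃ M : ℝ, ∀ P : Matrix (Fin n) (Fin n) ℝ, P.PosSemidef →
      (Fᵀ * P * F + Q - P).PosSemidef → P.trace ≤ M := by
  have hlim := aux_schur_pow F hF
  have hc : Continuous (fun G : Matrix (Fin n) (Fin n) ℝ => ∑ i, ∑ j, |(G * Gᵀ) i j|) := by
    fun_prop
  have h0 := (hc.tendsto 0).comp hlim
  have : ∀ᶠ N : ℕ in atTop, (∑ i, ∑ j, |((F ^ N) * (F ^ N)ᵀ) i j|) < 1 / 2 := by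
    refine h0.eventually_lt_const ?_
    simp
  obtain ⟨N, hN⟩ := this.exists
  obtain ⟨S, hS⟩ := aux_iter F Q N
  refine ⟨2 * S.trace, fun P hP h => ?_⟩
  have h1 := (hS P h).trace_nonneg
  rw [Matrix.trace_sub, Matrix.trace_add] at h1
  set G := F ^ N
  have h2 : (Gᵀ * P * G).trace ≤ (1 / 2) * P.trace := by
    have e : (Gᵀ * P * G).trace = ∑ i, ∑ j, (G * Gᵀ) i j * P j i := by
      rw [Matrix.mul_assoc, Matrix.trace_mul_comm, Matrix.mul_assoc, Matrix.trace_mul_comm]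
      simp only [Matrix.trace, Matrix.diag, Matrix.mul_apply (M := G * Gᵀ)]
    rw [e]
    calc _ ≤ ∑ i, ∑ j, |(G * Gᵀ) i j| * P.trace := by
          refine Finset.sum_le_sum fun i _ => Finset.sum_le_sum fun j _ => ?_
          refine (le_abs_self _).trans ?_
          rw [abs_mul]
          exact mul_le_mul_of_nonneg_left (aux_entry hP j i) (abs_nonneg _)
      _ = (∑ i, ∑ j, |(G * Gᵀ) i j|) * P.trace := by simp only [Finset.sum_mul]
      _ ≤ _ := mul_le_mul_of_nonneg_right hN.le hP.trace_nonneg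
  linarith

lemma aux_tm {X : Type*} {l : Filter X} {a b c : ℕ} {f : X → Matrix (Fin a) (Fin b) ℝ}
    {g : X → Matrix (Fin b) (Fin c) ℝ} {u v} (hf : Tendsto f l (𝓝 u)) (hg : Tendsto g l (𝓝 v)) :
    Tendsto (fun x => f x * g x) l (𝓝 (u * v)) := by
  have h : Continuous (fun p : Matrix (Fin a) (Fin b) ℝ × Matrix (Fin b) (Fin c) ℝ =>
    p.1 * p.2) := continuous_fst.matrix_mul continuous_snd
  exact (h.tendsto (u, v)).comp (hf.prodMk_nhds hg)

lemma aux_limit {n m : ℕ} (A : Matrix (Fin n) (Fin n) ℝ) (B : Matrix (Fin n) (Fin m) ℝ)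
    (hstab : Stabilizable A B) (hA : EigInClosedUnitDisc A) (P : Matrix (Fin n) (Fin n) ℝ)
    (hP : P.PosSemidef)
    (hE : Aᵀ * P * A - P - Aᵀ * P * B * (1 + Bᵀ * P * B)⁻¹ * (Bᵀ * P * A) = 0) : P = 0 := by
  obtain ⟨F, hF⟩ := hstab
  have hRK := aux_RK hP A B
  rw [Matrix.mul_assoc (Aᵀ * P * B) _ _] at hE
  change Aᵀ * P * A - P - Aᵀ * P * B * gainK A B P = 0 at hE
  set K := gainK A B P with hK
  obtain ⟨C, hC⟩ : ∃ C : Matrix (Fin n) (Fin n) ℝ, P = Cᵀ * C := by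
    open scoped MatrixOrder in
    obtain ⟨C, hC⟩ := CStarAlgebra.nonneg_iff_eq_star_mul_self.mp hP.nonneg
    exact ⟨C, by rw [hC, Matrix.star_eq_conjTranspose,
      Matrix.conjTranspose_eq_transpose_of_trivial]⟩
  have hK2 : K = Bᵀ * P * (A - B * K) := by
    rw [Matrix.mul_sub, ← hRK, Matrix.add_mul, Matrix.one_mul]
    simp only [Matrix.mul_assoc]
    abel
  have hR : P = Aᵀ * P * (A - B * K) := by
    rw [← sub_eq_zero, ← neg_eq_zero, ← hE, Matrix.mul_sub]
    simp only [Matrix.mul_assoc]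
    abel
  have hmul : ∀ {a b c : ℕ} (X : Matrix (Fin a) (Fin b) ℝ) (Y : Matrix (Fin b) (Fin c) ℝ),
      (X * Y).map Complex.ofReal = X.map Complex.ofReal * Y.map Complex.ofReal := by
    intro a b c X Y
    exact Matrix.map_mul (f := Complex.ofRealHom)
  have htr : ∀ {a b : ℕ} (X : Matrix (Fin a) (Fin b) ℝ),
      (Xᵀ).map Complex.ofReal = (X.map Complex.ofReal)ᴴ := by
    intro a b X
    ext i j; simp
  have hsub : ∀ {a b : ℕ} (X Y : Matrix (Fin a) (Fin b) ℝ),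
      (X - Y).map Complex.ofReal = X.map Complex.ofReal - Y.map Complex.ofReal := by
    intro a b X Y
    ext i j; simp
  have := aux_core (A.map Complex.ofReal) (C.map Complex.ofReal) (B.map Complex.ofReal)
    (P.map Complex.ofReal) ((A - B * K).map Complex.ofReal) (K.map Complex.ofReal)
    (F.map Complex.ofReal) (by rw [← htr, ← hmul, ← hC]) (by rw [hsub, hmul])
    (by rw [← htr, ← hmul, ← hmul, ← hK2]) (by rw [← htr, ← hmul, ← hmul, ← hR]) hA
    (by rw [← hmul, ← hsub]; exact hF)
  ext i j
  have := congrFun (congrFun this i) j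
  simpa using this

lemma aux_inv_cont {n m : ℕ} (B : Matrix (Fin n) (Fin m) ℝ) {y : Matrix (Fin n) (Fin n) ℝ}
    (hy : y.PosSemidef) : ContinuousAt (fun P : Matrix (Fin n) (Fin n) ℝ =>
      (1 + Bᵀ * P * B)⁻¹) y := by
  have h : (1 + Bᵀ * y * B).det ≠ 0 := (aux_R hy B).det_pos.ne'
  have h1 : ContinuousAt Inv.inv (1 + Bᵀ * y * B) := by
    apply continuousAt_matrix_inv
    rw [Ring.inverse_eq_inv']
    exact continuousAt_inv₀ h
  have h2 : Continuous (fun P : Matrix (Fin n) (Fin n) ℝ => 1 + Bᵀ * P * B) := by fun_prop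
  exact ContinuousAt.comp (f := fun P : Matrix (Fin n) (Fin n) ℝ => 1 + Bᵀ * P * B) h1
    h2.continuousAt

lemma aux_gain_cont {n m : ℕ} (A : Matrix (Fin n) (Fin n) ℝ) (B : Matrix (Fin n) (Fin m) ℝ)
    {y : Matrix (Fin n) (Fin n) ℝ}
    (hy : y.PosSemidef) : ContinuousAt (fun P : Matrix (Fin n) (Fin n) ℝ => gainK A B P) y := by
  unfold gainK
  have h2 : Continuous (fun P : Matrix (Fin n) (Fin n) ℝ => Bᵀ * P * A) := by fun_prop
  exact aux_tm (aux_inv_cont B hy) h2.continuousAt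

lemma aux_psd_closed {n : ℕ} : IsClosed {P : Matrix (Fin n) (Fin n) ℝ | P.PosSemidef} := by
  simp only [Matrix.posSemidef_iff_dotProduct_mulVec, Matrix.IsHermitian]
  rw [Set.ofPred_and]
  refine IsClosed.inter (isClosed_eq (by fun_prop) (by fun_prop)) ?_
  rw [Set.ofPred_forall]
  exact isClosed_iInter fun x => isClosed_le (by fun_prop) (by fun_prop)

/-- the low-gain Riccati solution `P_ε` and gain `K_ε` tend to `0` as
`ε → 0⁺`; in particular, for every `μ > 0` there is `ε* > 0` with `‖B K_ε‖ ≤ μ`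
(induced 2-norm) for all `ε ∈ (0, ε*]`. -/
theorem lowgain_riccati_to_zero {n m : ℕ}
    (A : Matrix (Fin n) (Fin n) ℝ) (B : Matrix (Fin n) (Fin m) ℝ)
    (hstab : Stabilizable A B) (hA : EigInClosedUnitDisc A)
    (P : ℝ → Matrix (Fin n) (Fin n) ℝ)
    (hP : ∀ ε > (0 : ℝ), IsDARESol A B ε (P ε)) :
    Tendsto P (nhdsWithin 0 (Set.Ioi 0)) (nhds 0) ∧
    Tendsto (fun ε => gainK A B (P ε)) (nhdsWithin 0 (Set.Ioi 0)) (nhds 0) ∧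
    ∀ μ > (0 : ℝ), ∃ εstar > (0 : ℝ), ∀ ε ∈ Set.Ioc (0 : ℝ) εstar,
      ‖Matrix.toEuclideanCLM (𝕜 := ℝ) (B * gainK A B (P ε))‖ ≤ μ := by
  obtain ⟨K', hK'⟩ := id hstab
  have hEq : ∀ P : Matrix (Fin n) (Fin n) ℝ, Aᵀ * P * B * (1 + Bᵀ * P * B)⁻¹ * (Bᵀ * P * A)
      = Aᵀ * P * B * gainK A B P := fun P => by rw [gainK, Matrix.mul_assoc (Aᵀ * P * B)]
  obtain ⟨M, hM⟩ := aux_bound (A - B * K') (K'ᵀ * K' + 1) hK'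
  have hmemIoc : Set.Ioc (0 : ℝ) 1 ∈ 𝓝[>] (0 : ℝ) := Ioc_mem_nhdsGT one_pos
  have hbd : ∀ ε ∈ Set.Ioc (0 : ℝ) 1, (P ε).trace ≤ M := by
    intro ε hε
    have h := hP ε hε.1
    refine hM _ h.1.posSemidef ?_
    have h1 := aux_ineq A B h K'
    have h2 : ((1 - ε) • (1 : Matrix (Fin n) (Fin n) ℝ)).PosSemidef :=
      Matrix.PosSemidef.one.smul (by linarith [hε.2])
    convert h1.add h2 using 1
    rw [sub_smul, one_smul]
    abel
  have hcpt : IsCompact (Set.pi Set.univ (fun _ : Fin n => Set.pi Set.univ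
      (fun _ : Fin n => Set.Icc (-M) M)) : Set (Matrix (Fin n) (Fin n) ℝ)) :=
    isCompact_univ_pi fun _ => isCompact_univ_pi fun _ => isCompact_Icc
  have hP0 : Tendsto P (𝓝[>] 0) (𝓝 0) := by
    refine hcpt.tendsto_nhds_of_unique_mapClusterPt ?_ ?_
    · filter_upwards [hmemIoc] with ε hε
      intro i _ j _
      exact abs_le.mp ((aux_entry (hP ε hε.1).1.posSemidef i j).trans (hbd ε hε))
    · intro (y : Matrix (Fin n) (Fin n) ℝ) _ hy
      obtain ⟨U, hU, hUy⟩ := mapClusterPt_iff_ultrafilter.mp hy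
      have hpos : ∀ᶠ ε in (U : Filter ℝ), 0 < ε := hU self_mem_nhdsWithin
      have hyp : y.PosSemidef := aux_psd_closed.mem_of_tendsto hUy
        (hpos.mono fun ε hε => (hP ε hε).1.posSemidef)
      apply aux_limit A B hstab hA y hyp
      have hg : ContinuousAt (fun P : Matrix (Fin n) (Fin n) ℝ => Aᵀ * P * A - P -
          Aᵀ * P * B * (1 + Bᵀ * P * B)⁻¹ * (Bᵀ * P * A)) y := by
        simp only [hEq]
        have c1 : Continuous (fun P : Matrix (Fin n) (Fin n) ℝ => Aᵀ * P * A - P) := by fun_prop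
        have c2 : Continuous (fun P : Matrix (Fin n) (Fin n) ℝ => Aᵀ * P * B) := by fun_prop
        exact c1.continuousAt.sub (aux_tm c2.continuousAt (aux_gain_cont A B hyp))
      have h1 := hg.tendsto.comp hUy
      have h2 : Tendsto (fun ε : ℝ => -(ε • (1 : Matrix (Fin n) (Fin n) ℝ))) (U : Filter ℝ)
          (𝓝 0) := by
        have c : Continuous (fun ε : ℝ => -(ε • (1 : Matrix (Fin n) (Fin n) ℝ))) := by fun_prop
        have := (c.tendsto 0).mono_left (hU.trans nhdsWithin_le_nhds)
        simpa using this
      refine tendsto_nhds_unique (h1.congr' ?_) h2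
      filter_upwards [hpos] with ε hε
      exact eq_neg_of_add_eq_zero_left (hP ε hε).2
  have hK0 : Tendsto (fun ε => gainK A B (P ε)) (𝓝[>] 0) (𝓝 0) := by
    have := (aux_gain_cont A B (y := 0) Matrix.PosSemidef.zero).tendsto.comp hP0
    simpa [gainK, Function.comp_def] using this
  refine ⟨hP0, hK0, fun μ hμ => ?_⟩
  have hn : Continuous (fun K : Matrix (Fin m) (Fin n) ℝ =>
      ‖Matrix.toEuclideanCLM (𝕜 := ℝ) (B * K)‖) := by
    have c1 : Continuous (Matrix.toEuclideanCLM (n := Fin n) (𝕜 := ℝ)) :=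
      LinearMap.continuous_of_finiteDimensional
        (Matrix.toEuclideanCLM (n := Fin n) (𝕜 := ℝ)).toAlgEquiv.toLinearMap
    have c2 : Continuous (fun K : Matrix (Fin m) (Fin n) ℝ => B * K) := by fun_prop
    exact (c1.comp c2).norm
  have h3 := (hn.tendsto 0).comp hK0
  have h4 : ∀ᶠ ε in 𝓝[>] (0 : ℝ),
      ‖Matrix.toEuclideanCLM (𝕜 := ℝ) (B * gainK A B (P ε))‖ < μ :=
    h3.eventually_lt_const (by simpa using hμ)
  obtain ⟨e, he, hsub⟩ := (mem_nhdsGT_iff_exists_Ioc_subset).mp h4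
  exact ⟨e, he, fun ε hε => (hsub hε).le⟩
end
end

section
/- Let A ∈ ℝ^{n×n}, B ∈ ℝ^{n×m} with (A,B) stabilizable and all eigenvalues of A in the closed unit disc, and let κ̄ ∈ ℕ satisfy κ̄·ω_max < π/2. Let ρ > 0 satisfy ρ·cos(κ̄·ω_max) > 1/2. Then there exists ε* > 0 such that for all ε ∈ (0, ε*] and for every integer delay κ ∈ {0, …, κ̄}, the delayed closed-loop system x(k+1) = A x(k) − ρ B K_ε x(k − κ) is asymptotically stable, i.e., every solution x : {−κ̄, −κ̄+1, …} → ℝ^n of the recursion (with arbitrary initial data on {−κ̄,…,0}) satisfies x(k) → 0 as k → ∞. Here P_ε is the unique positive definite solution of the discrete algebraic Riccati equation AᵀP A − P − AᵀP B (I + BᵀP B)^{−1} BᵀP A + εI = 0 and K_ε := (I + BᵀP_ε B)^{−1} BᵀP_ε A. -/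
open Matrix Filter Topology Kronecker
open scoped Classical

noncomputable section

section PowConv

lemma pow_tendsto_zero_of_spectrum {𝔸 : Type*} [NormedRing 𝔸] [NormedAlgebra ℂ 𝔸] [CompleteSpace 𝔸]
    (a : 𝔸) (h : ∀ μ ∈ spectrum ℂ a, ‖μ‖ < 1) : Tendsto (fun k : ℕ => a ^ k) atTop (𝓝 0) := by
  have hr : spectralRadius ℂ a < (1 : NNReal) := by
    rcases (spectrum ℂ a).eq_empty_or_nonempty with he | hne
    · simp [spectralRadius, he]
    · exact spectrum.spectralRadius_lt_of_forall_lt_of_nonempty hne (fun k hk => by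
        have := h k hk
        exact_mod_cast this)
  obtain ⟨r, hr1, hr2⟩ := ENNReal.lt_iff_exists_nnreal_btwn.1 hr
  have hr2' : (r : ℝ) < 1 := by exact_mod_cast hr2
  have hG := spectrum.pow_nnnorm_pow_one_div_tendsto_nhds_spectralRadius a
  have hev := hG.eventually (gt_mem_nhds hr1)
  rw [tendsto_zero_iff_norm_tendsto_zero]
  refine squeeze_zero' (Eventually.of_forall fun _ => norm_nonneg _) ?_
    (tendsto_pow_atTop_nhds_zero_of_lt_one r.2 hr2')
  filter_upwards [hev, eventually_gt_atTop 0] with k hk hk0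
  have h1 : ((‖a ^ k‖₊ : ENNReal) ^ (1 / (k : ℝ))) ^ (k : ℝ) ≤ (r : ENNReal) ^ (k : ℝ) :=
    ENNReal.rpow_le_rpow hk.le (by positivity)
  rw [← ENNReal.rpow_mul, one_div, inv_mul_cancel₀ (by positivity), ENNReal.rpow_one,
    ENNReal.rpow_natCast] at h1
  have h2 : ‖a ^ k‖₊ ≤ r ^ k := by exact_mod_cast h1
  exact_mod_cast h2

lemma end_pow_tendsto_zero {E : Type} [NormedAddCommGroup E] [NormedSpace ℂ E]
    [FiniteDimensional ℂ E] (T : Module.End ℂ E)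
    (h : ∀ (μ : ℂ) (v : E), v ≠ 0 → T v = μ • v → ‖μ‖ < 1) (v : E) :
    Tendsto (fun k : ℕ => (T ^ k) v) atTop (𝓝 0) := by
  have : CompleteSpace E := FiniteDimensional.complete ℂ E
  have hs : ∀ μ ∈ spectrum ℂ (Module.End.toContinuousLinearMap E T), ‖μ‖ < 1 := by
    intro μ hμ
    rw [AlgEquiv.spectrum_eq, ← Module.End.hasEigenvalue_iff_mem_spectrum] at hμ
    obtain ⟨w, hw⟩ := hμ.exists_hasEigenvector
    exact h μ w hw.2 hw.apply_eq_smul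
  have h1 := pow_tendsto_zero_of_spectrum _ hs
  have h2 := ((ContinuousLinearMap.apply ℂ E v).continuous.tendsto 0).comp h1
  simp only [map_zero] at h2
  refine h2.congr fun k => ?_
  simp only [Function.comp, ContinuousLinearMap.apply_apply]
  rw [← map_pow]; rfl

/-- the companion operator -/
def compT {n : ℕ} (κ : ℕ) (A D : Matrix (Fin n) (Fin n) ℂ) :
    Module.End ℂ (Fin (κ + 1) → Fin n → ℂ) where
  toFun X := Fin.snoc (α := fun _ => Fin n → ℂ) (fun i : Fin κ => X i.succ)
    (A *ᵥ X (Fin.last κ) - D *ᵥ X 0)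
  map_add' X Y := by
    ext i j
    refine Fin.lastCases ?_ (fun i => ?_) i
    · simp [Matrix.mulVec_add]; ring
    · simp
  map_smul' c X := by
    ext i j
    refine Fin.lastCases ?_ (fun i => ?_) i
    · simp [Matrix.mulVec_smul]; ring
    · simp

lemma delay_conv {n : ℕ} (κ : ℕ) (A D : Matrix (Fin n) (Fin n) ℂ)
    (h : ∀ (z : ℂ) (v : Fin n → ℂ), v ≠ 0 → 1 ≤ ‖z‖ →
      z ^ (κ + 1) • v ≠ z ^ κ • A *ᵥ v - D *ᵥ v)
    (y : ℕ → Fin n → ℂ) (hy : ∀ k, y (k + κ + 1) = A *ᵥ y (k + κ) - D *ᵥ y k) :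
    Tendsto y atTop (𝓝 0) := by
  have hT : ∀ (μ : ℂ) (v : Fin (κ + 1) → Fin n → ℂ), v ≠ 0 → compT κ A D v = μ • v →
      ‖μ‖ < 1 := by
    intro μ v hv hμ
    by_contra hc
    push Not at hc
    have hs : ∀ i : Fin κ, v i.succ = μ • v i.castSucc := fun i => by
      have := congrFun hμ i.castSucc
      simpa [compT] using this
    have hl : A *ᵥ v (Fin.last κ) - D *ᵥ v 0 = μ • v (Fin.last κ) := by
      have := congrFun hμ (Fin.last κ)
      simpa [compT] using this
    have hp : ∀ i : Fin (κ + 1), v i = μ ^ (i : ℕ) • v 0 := by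
      intro i
      induction i using Fin.induction with
      | zero => simp
      | succ i ih => rw [hs, ih, smul_smul]; simp [pow_succ']
    have hv0 : v 0 ≠ 0 := by
      intro h0
      apply hv
      ext1 i
      rw [hp i, h0]; simp
    apply h μ (v 0) hv0 hc
    have := hp (Fin.last κ)
    rw [this, Matrix.mulVec_smul, smul_smul] at hl
    simp only [Fin.val_last] at hl
    rw [hl, pow_succ']
  have hX : ∀ k, (compT κ A D ^ k) (fun i => y i) = fun i : Fin (κ + 1) => y (k + i) := by
    intro k
    induction k with
    | zero => simp
    | succ k ih =>
      rw [pow_succ', Module.End.mul_apply, ih]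
      ext1 i
      refine Fin.lastCases ?_ (fun i => ?_) i
      · simp [compT]
        rw [← hy k]; congr 1; ring
      · simp [compT]; congr 1; ring
  have h1 := end_pow_tendsto_zero _ hT (fun i => y i)
  simp_rw [hX] at h1
  have h2 := tendsto_pi_nhds.1 h1 0
  simpa using h2

end PowConv

section Core

open scoped ComplexOrder MatrixOrder Matrix.Norms.L2Operator

/-- complex form of the Riccati relations -/
structure CD {n m : ℕ} (A : Matrix (Fin n) (Fin n) ℂ) (B : Matrix (Fin n) (Fin m) ℂ) (ε : ℝ)
    (P : Matrix (Fin n) (Fin n) ℂ) (K : Matrix (Fin m) (Fin n) ℂ) : Prop where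
  psd : P.PosSemidef
  gain : (1 + Bᴴ * P * B) * K = Bᴴ * P * A
  ric : Aᴴ * P * A - P - Kᴴ * (1 + Bᴴ * P * B) * K + (ε : ℂ) • (1 : Matrix (Fin n) (Fin n) ℂ) = 0

variable {n m : ℕ} {A : Matrix (Fin n) (Fin n) ℂ} {B : Matrix (Fin n) (Fin m) ℂ} {ε : ℝ}
    {P : Matrix (Fin n) (Fin n) ℂ} {K : Matrix (Fin m) (Fin n) ℂ}

lemma CD.e1 (h : CD A B ε P K) {l : ℕ} (X : Matrix (Fin l) (Fin m) ℂ) :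
    X * K + X * (Bᴴ * (P * (B * K))) = X * (Bᴴ * (P * A)) := by
  have := congrArg (fun Y => X * Y) h.gain
  simpa only [Matrix.mul_assoc, Matrix.add_mul, Matrix.mul_add, Matrix.one_mul] using this

lemma CD.e2 (h : CD A B ε P K) {l : ℕ} (X : Matrix (Fin m) (Fin l) ℂ) :
    Kᴴ * X + Kᴴ * (Bᴴ * (P * (B * X))) = Aᴴ * (P * (B * X)) := by
  have := congrArg (fun Y => Yᴴ * X) h.gain
  simpa only [Matrix.mul_assoc, Matrix.add_mul, Matrix.mul_add, Matrix.one_mul, Matrix.mul_one,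
    conjTranspose_mul, conjTranspose_add, conjTranspose_one, conjTranspose_conjTranspose,
    h.psd.1.eq] using this

lemma CD.e3 (h : CD A B ε P K) :
    Aᴴ * (P * A) - P - (Kᴴ * K + Kᴴ * (Bᴴ * (P * (B * K)))) + (ε : ℂ) • 1 = 0 := by
  have := h.ric
  simpa only [Matrix.mul_assoc, Matrix.add_mul, Matrix.mul_add, Matrix.one_mul] using this

lemma CD.closed (h : CD A B ε P K) :
    (A - B * K)ᴴ * P * (A - B * K) = P - (ε : ℂ) • 1 - Kᴴ * K := by
  have h1 := h.e1 Kᴴ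
  have h2 := h.e2 K
  have h3 := h.e3
  simp only [Matrix.mul_assoc, Matrix.sub_mul, Matrix.mul_sub, conjTranspose_sub, conjTranspose_mul]
  linear_combination (norm := module) h3 + h1 + h2

lemma CD.semi (h : CD A B ε P K) :
    Aᴴ * P * (A - B * K) = P - (ε : ℂ) • 1 := by
  have h2 := h.e2 K
  have h3 := h.e3
  simp only [Matrix.mul_assoc, Matrix.mul_sub]
  linear_combination (norm := module) h3 + h2

lemma CD.cmp (h : CD A B ε P K) (L : Matrix (Fin m) (Fin n) ℂ) :
    (A - B * L)ᴴ * P * (A - B * L) + Lᴴ * L + (ε : ℂ) • 1 - P =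
      (L - K)ᴴ * (1 + Bᴴ * P * B) * (L - K) := by
  have h1 := h.e1 Lᴴ
  have h2 := h.e2 L
  have h3 := h.e3
  simp only [Matrix.mul_assoc, Matrix.sub_mul, Matrix.mul_sub, conjTranspose_sub, conjTranspose_mul,
    Matrix.add_mul, Matrix.mul_add, Matrix.one_mul]
  linear_combination (norm := module) h3 + h1 + h2

/-- gain `c K` -/
lemma CD.scaled (h : CD A B ε P K) (c : ℂ) :
    (A - c • (B * K))ᴴ * P * (A - c • (B * K)) = P - (ε : ℂ) • 1
      - ((2 * c.re - 1 : ℝ) : ℂ) • (Kᴴ * K + Kᴴ * (Bᴴ * (P * (B * K))))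
      + ((‖c‖ ^ 2 : ℝ) : ℂ) • (Kᴴ * (Bᴴ * (P * (B * K)))) := by
  have h1 := h.e1 Kᴴ
  have h2 := h.e2 K
  have h3 := h.e3
  have hc : star c * c = ((‖c‖ ^ 2 : ℝ) : ℂ) := by
    simp [Complex.conj_mul']
  have hc2 : star c + c = ((2 * c.re : ℝ) : ℂ) := by
    rw [add_comm]; simpa using Complex.add_conj c
  have hc3 : ((2 * c.re - 1 : ℝ) : ℂ) = star c + c - 1 := by rw [hc2]; push_cast; ring
  rw [hc3, ← hc]
  simp only [Matrix.mul_assoc, Matrix.sub_mul, Matrix.mul_sub, conjTranspose_sub, conjTranspose_mul,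
    conjTranspose_smul, Matrix.smul_mul, Matrix.mul_smul]
  linear_combination (norm := module) h3 + (star c) • h1 + c • h2

lemma CD.S_psd (h : CD A B ε P K) : (Bᴴ * P * B).PosSemidef :=
  h.psd.conjTranspose_mul_mul_same B

lemma eps_psd (hε : 0 ≤ ε) : ((ε : ℂ) • (1 : Matrix (Fin n) (Fin n) ℂ)).PosSemidef :=
  Matrix.PosSemidef.one.smul (by exact_mod_cast hε)

lemma CD.K_le (h : CD A B ε P K) (hε : 0 ≤ ε) : Kᴴ * K ≤ P := by
  have h1 := h.closed
  rw [Matrix.le_iff]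
  have : P - Kᴴ * K = (A - B * K)ᴴ * P * (A - B * K) + (ε : ℂ) • 1 := by rw [h1]; abel
  rw [this]
  exact (h.psd.conjTranspose_mul_mul_same _).add (eps_psd hε)

lemma CD.K_norm (h : CD A B ε P K) (hε : 0 ≤ ε) : ‖K‖ * ‖K‖ ≤ ‖P‖ := by
  rw [← Matrix.l2_opNorm_conjTranspose_mul_self]
  exact CStarAlgebra.norm_le_norm_of_nonneg_of_le
    (posSemidef_conjTranspose_mul_self K).nonneg (h.K_le hε)

lemma CD.P_le (h : CD A B ε P K) (hε1 : ε ≤ 1) (L : Matrix (Fin m) (Fin n) ℂ) :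
    P ≤ (A - B * L)ᴴ * P * (A - B * L) + (Lᴴ * L + 1) := by
  have h1 := h.cmp L
  rw [Matrix.le_iff]
  have : (A - B * L)ᴴ * P * (A - B * L) + (Lᴴ * L + 1) - P =
      (L - K)ᴴ * (1 + Bᴴ * P * B) * (L - K) + ((1 - ε : ℝ) : ℂ) • 1 := by
    rw [← h1]; push_cast; module
  rw [this]
  exact ((Matrix.PosSemidef.one.add h.S_psd).conjTranspose_mul_mul_same _).add
    (eps_psd (by linarith))

lemma P_iter {F P Q : Matrix (Fin n) (Fin n) ℂ} (h : P ≤ Fᴴ * P * F + Q) (N : ℕ) :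
    P ≤ (F ^ N)ᴴ * P * F ^ N + ∑ j ∈ Finset.range N, (F ^ j)ᴴ * Q * F ^ j := by
  induction N with
  | zero => simp
  | succ N ih =>
    refine ih.trans ?_
    rw [Finset.sum_range_succ, ← sub_nonneg]
    have := (Matrix.le_iff.1 h).conjTranspose_mul_mul_same (F ^ N)
    rw [← Matrix.nonneg_iff_posSemidef] at this
    convert this using 1
    rw [pow_succ']
    simp only [Matrix.mul_assoc, Matrix.sub_mul, Matrix.mul_sub, Matrix.mul_add, Matrix.add_mul,
      conjTranspose_mul]
    abel

lemma P_bounded (L : Matrix (Fin m) (Fin n) ℂ) (hL : SchurStableC (A - B * L)) :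
    ∃ C : ℝ, 0 ≤ C ∧ ∀ ε P K, CD A B ε P K → ε ≤ 1 → ‖P‖ ≤ C := by
  have h0 := pow_tendsto_zero_of_spectrum (A - B * L) hL
  have h1 := (tendsto_zero_iff_norm_tendsto_zero.1 h0).eventually (gt_mem_nhds (show (0:ℝ) < 1/2 by norm_num))
  obtain ⟨N, hN⟩ := h1.exists
  set F := A - B * L
  set S := ∑ j ∈ Finset.range N, (F ^ j)ᴴ * (Lᴴ * L + 1) * F ^ j
  refine ⟨2 * ‖S‖, by positivity, fun ε P K h hε => ?_⟩
  have h2 := P_iter (h.P_le hε L) N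
  have h3 := CStarAlgebra.norm_le_norm_of_nonneg_of_le h.psd.nonneg h2
  have h4 : ‖(F ^ N)ᴴ * P * F ^ N‖ ≤ ‖F ^ N‖ * ‖P‖ * ‖F ^ N‖ := by
    refine (norm_mul_le _ _).trans ?_
    gcongr
    refine (norm_mul_le _ _).trans ?_
    rw [Matrix.l2_opNorm_conjTranspose]
  have h5 := norm_add_le ((F ^ N)ᴴ * P * F ^ N) S
  have h6 : ‖F ^ N‖ * ‖P‖ * ‖F ^ N‖ ≤ 1/2 * ‖P‖ * 1 := by
    gcongr
    linarith
  have h7 : ‖P‖ ≤ ‖(F ^ N)ᴴ * P * F ^ N + S‖ := h3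
  linarith


lemma mem_spec {M : Matrix (Fin n) (Fin n) ℂ} {μ : ℂ} {v : Fin n → ℂ} (hv : v ≠ 0)
    (h : M *ᵥ v = μ • v) : μ ∈ spectrum ℂ M := by
  rw [← Matrix.spectrum_toLin', ← Module.End.hasEigenvalue_iff_mem_spectrum]
  exact Module.End.hasEigenvalue_of_hasEigenvector (x := v)
    ⟨Module.End.mem_eigenspace_iff.2 (by simpa using h), hv⟩

lemma mem_spec_conj {M : Matrix (Fin n) (Fin n) ℂ} {μ : ℂ} {v : Fin n → ℂ} (hv : v ≠ 0)
    (h : Mᴴ *ᵥ v = μ • v) : star μ ∈ spectrum ℂ M := by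
  have := mem_spec hv h
  rw [← Matrix.star_eq_conjTranspose, spectrum.map_star] at this
  simpa using this

lemma P0_zero (hA : ∀ μ ∈ spectrum ℂ A, ‖μ‖ ≤ 1)
    (L : Matrix (Fin m) (Fin n) ℂ) (hL : SchurStableC (A - B * L)) (h : CD A B 0 P K) : P = 0 := by
  by_contra hP
  have hsemi : Aᴴ * P * (A - B * K) = P := by simpa using h.semi
  have hcl : (A - B * K)ᴴ * P * (A - B * K) = P - Kᴴ * K := by simpa using h.closed
  set A0 := A - B * K with hA0
  -- the range of P
  let V : Submodule ℂ (Fin n → ℂ) := LinearMap.range P.mulVecLin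
  have hle : V ≤ V.map Aᴴ.mulVecLin := by
    rintro _ ⟨x, rfl⟩
    refine ⟨P *ᵥ (A0 *ᵥ x), ⟨A0 *ᵥ x, rfl⟩, ?_⟩
    simp only [Matrix.mulVecLin_apply]
    rw [Matrix.mulVec_mulVec, Matrix.mulVec_mulVec, hsemi]
  have heq : V = V.map Aᴴ.mulVecLin :=
    Submodule.eq_of_le_of_finrank_le hle (Submodule.finrank_map_le _ _)
  have hmaps : ∀ x ∈ V, Aᴴ.mulVecLin x ∈ V := fun x hx => by
    rw [heq]; exact Submodule.mem_map_of_mem hx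
  let T : Module.End ℂ V := Aᴴ.mulVecLin.restrict hmaps
  have hsurj : Function.Surjective T := by
    rintro ⟨y, hy⟩
    have hy' := hy
    rw [heq] at hy'
    obtain ⟨x, hx, rfl⟩ := hy'
    exact ⟨⟨x, hx⟩, rfl⟩
  have hinj : Function.Injective T := LinearMap.injective_iff_surjective.2 hsurj
  have hnt : Nontrivial V := by
    rw [Submodule.nontrivial_iff_ne_bot]
    intro hb
    apply hP
    have : P.mulVecLin = 0 := LinearMap.range_eq_bot.1 hb
    ext i j
    have := congrFun (LinearMap.congr_fun this (Pi.single j 1)) i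
    simpa using this
  obtain ⟨lam, hlam⟩ := Module.End.exists_eigenvalue T
  obtain ⟨⟨w, v, hv⟩, hw1⟩ := hlam.exists_hasEigenvector
  have hw := hw1.apply_eq_smul
  have hw0 := hw1.2
  have hPv : P *ᵥ v = w := hv
  have hAw : Aᴴ *ᵥ w = lam • w := congrArg Subtype.val hw
  have hwne : w ≠ 0 := fun h0 => hw0 (Subtype.ext h0)
  have hlam0 : lam ≠ 0 := by
    rintro rfl
    apply hw0
    apply hinj
    rw [hw]; simp
  have hlam1 : ‖lam‖ ≤ 1 := by
    have := hA _ (mem_spec_conj hwne hAw)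
    simpa using this
  have hPA0 : P *ᵥ (A0 *ᵥ v) = lam⁻¹ • w := by
    have : T ⟨P *ᵥ (A0 *ᵥ v), ⟨_, rfl⟩⟩ = T ⟨lam⁻¹ • w, V.smul_mem _ ⟨v, hv⟩⟩ := by
      apply Subtype.ext
      change Aᴴ *ᵥ (P *ᵥ (A0 *ᵥ v)) = Aᴴ *ᵥ (lam⁻¹ • w)
      rw [Matrix.mulVec_smul, hAw, smul_smul, inv_mul_cancel₀ hlam0, one_smul,
        Matrix.mulVec_mulVec, Matrix.mulVec_mulVec, hsemi, hPv]
    exact congrArg Subtype.val (hinj this)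
  -- quadratic forms
  set q : ℂ := star v ⬝ᵥ P *ᵥ v with hq
  have hqnn : 0 ≤ q := h.psd.dotProduct_mulVec_nonneg v
  have hqne : q ≠ 0 := fun h0 => hwne (by rw [← hPv]; exact (h.psd.dotProduct_mulVec_zero_iff v).1 h0)
  have hswap : star (A0 *ᵥ v) ⬝ᵥ P *ᵥ v = star (P *ᵥ (A0 *ᵥ v)) ⬝ᵥ v := by
    rw [Matrix.star_mulVec P, h.psd.1.eq, Matrix.dotProduct_mulVec]
  have hswap2 : star (P *ᵥ v) ⬝ᵥ v = q := by
    rw [Matrix.star_mulVec P, h.psd.1.eq, hq, Matrix.dotProduct_mulVec]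
  have e1 : star v ⬝ᵥ ((A0ᴴ * P * A0) *ᵥ v) = (lam⁻¹ * star lam⁻¹) * q := by
    rw [Matrix.mul_assoc, ← Matrix.mulVec_mulVec, Matrix.dotProduct_mulVec, ← Matrix.star_mulVec,
      ← Matrix.mulVec_mulVec, hPA0, dotProduct_smul, ← hPv, hswap, hPA0, star_smul, smul_dotProduct,
      ← hPv, hswap2]
    simp [mul_assoc]
  have e2 : star v ⬝ᵥ ((P - Kᴴ * K) *ᵥ v) = q - star (K *ᵥ v) ⬝ᵥ (K *ᵥ v) := by
    rw [Matrix.sub_mulVec, dotProduct_sub, ← Matrix.mulVec_mulVec, Matrix.dotProduct_mulVec _ Kᴴ,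
      ← Matrix.star_mulVec]
  rw [hcl, e2] at e1
  have hr : lam⁻¹ * star lam⁻¹ = (((‖lam‖⁻¹) ^ 2 : ℝ) : ℂ) := by
    rw [Complex.star_def, Complex.mul_conj']; simp
  have hk : 0 ≤ star (K *ᵥ v) ⬝ᵥ (K *ᵥ v) := dotProduct_star_self_nonneg _
  rw [hr] at e1
  have hre := congrArg Complex.re e1
  rw [Complex.sub_re, Complex.re_ofReal_mul] at hre
  have hqpos : 0 < q.re := (Complex.pos_iff.1 (lt_of_le_of_ne hqnn hqne.symm)).1
  have hkre : 0 ≤ (star (K *ᵥ v) ⬝ᵥ (K *ᵥ v)).re := (Complex.nonneg_iff.1 hk).1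
  have hlampos : 0 < ‖lam‖ := norm_pos_iff.2 hlam0
  have hge : 1 ≤ ‖lam‖⁻¹ := (one_le_inv₀ hlampos).2 hlam1
  have hsq : (‖lam‖⁻¹) ^ 2 ≤ 1 := by
    by_contra hc
    push Not at hc
    nlinarith
  have hl1 : 1 ≤ ‖lam‖ := by
    have : ‖lam‖⁻¹ ≤ 1 := by nlinarith
    exact (inv_le_one₀ hlampos).1 this
  have hk0 : (star (K *ᵥ v) ⬝ᵥ (K *ᵥ v)).re = 0 := by
    have h1 : (‖lam‖⁻¹) ^ 2 = 1 := le_antisymm hsq (by nlinarith)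
    rw [h1] at hre
    linarith
  have hKv : K *ᵥ v = 0 := by
    rw [← dotProduct_star_self_eq_zero (v := K *ᵥ v)]
    exact Complex.ext hk0 (Complex.nonneg_iff.1 hk).2.symm
  have hA0v : A0 *ᵥ v = A *ᵥ v := by
    rw [hA0, Matrix.sub_mulVec, ← Matrix.mulVec_mulVec, hKv]; simp
  have hBw : Bᴴ *ᵥ w = 0 := by
    have h1 : ((1 + Bᴴ * P * B) * K) *ᵥ v = 0 := by
      rw [← Matrix.mulVec_mulVec, hKv]; simp
    rw [h.gain, ← Matrix.mulVec_mulVec, ← Matrix.mulVec_mulVec, ← hA0v, hPA0, Matrix.mulVec_smul] at h1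
    exact (smul_eq_zero.1 h1).resolve_left (inv_ne_zero hlam0)
  have hF : (A - B * L)ᴴ *ᵥ w = lam • w := by
    rw [conjTranspose_sub, conjTranspose_mul, Matrix.sub_mulVec, ← Matrix.mulVec_mulVec, hBw, hAw]
    simp
  have := hL _ (mem_spec_conj hwne hF)
  rw [norm_star] at this
  linarith

lemma P_tendsto (hA : ∀ μ ∈ spectrum ℂ A, ‖μ‖ ≤ 1)
    (L : Matrix (Fin m) (Fin n) ℂ) (hL : SchurStableC (A - B * L))
    (P : ℝ → Matrix (Fin n) (Fin n) ℂ) (K : ℝ → Matrix (Fin m) (Fin n) ℂ)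
    (h : ∀ ε > 0, CD A B ε (P ε) (K ε)) : Tendsto P (𝓝[>] 0) (𝓝 0) := by
  obtain ⟨C, hC0, hC⟩ := P_bounded L hL
  apply tendsto_of_subseq_tendsto
  intro ns hns
  have hns0 : Tendsto ns atTop (𝓝 0) := hns.mono_right nhdsWithin_le_nhds
  have hpos : ∀ᶠ k in atTop, 0 < ns k := hns.eventually self_mem_nhdsWithin
  have hle : ∀ᶠ k in atTop, ns k ≤ 1 := hns0.eventually (ge_mem_nhds (by norm_num))
  have : ProperSpace (Matrix (Fin n) (Fin n) ℂ) := FiniteDimensional.proper ℂ _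
  have : ProperSpace (Matrix (Fin m) (Fin n) ℂ) := FiniteDimensional.proper ℂ _
  have hbd : ∀ᶠ k in atTop, (P (ns k), K (ns k)) ∈
      Metric.closedBall (0 : Matrix (Fin n) (Fin n) ℂ) C ×ˢ
        Metric.closedBall (0 : Matrix (Fin m) (Fin n) ℂ) (C + 1) := by
    filter_upwards [hpos, hle] with k h1 h2
    have h3 := hC _ _ _ (h _ h1) h2
    have h4 := (h _ h1).K_norm h1.le
    refine ⟨by simpa using h3, ?_⟩
    simp only [mem_closedBall_zero_iff]
    nlinarith [norm_nonneg (K (ns k))]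
  obtain ⟨⟨P0, K0⟩, -, φ, hφ, hlim⟩ := tendsto_subseq_of_frequently_bounded
    (Metric.isBounded_closedBall.prod Metric.isBounded_closedBall) hbd.frequently
  have hP0 : Tendsto (fun k => P (ns (φ k))) atTop (𝓝 P0) := (continuous_fst.tendsto _).comp hlim
  have hK0 : Tendsto (fun k => K (ns (φ k))) atTop (𝓝 K0) := (continuous_snd.tendsto _).comp hlim
  have he0 : Tendsto (fun k => ns (φ k)) atTop (𝓝 0) := hns0.comp hφ.tendsto_atTop
  have hcd : ∀ᶠ k in atTop, CD A B (ns (φ k)) (P (ns (φ k))) (K (ns (φ k))) :=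
    (hφ.tendsto_atTop.eventually hpos).mono fun k hk => h _ hk
  have h0 : CD A B 0 P0 K0 := by
    refine ⟨?_, ?_, ?_⟩
    · rw [← Matrix.nonneg_iff_posSemidef]
      exact ge_of_tendsto hP0 (hcd.mono fun k hk => hk.psd.nonneg)
    · have c1 : Continuous fun p : Matrix (Fin n) (Fin n) ℂ × Matrix (Fin m) (Fin n) ℂ =>
          (1 + Bᴴ * p.1 * B) * p.2 - Bᴴ * p.1 * A := by fun_prop
      have t1 := (c1.tendsto (P0, K0)).comp hlim
      have t2 := tendsto_nhds_unique (t1.congr' (f₂ := fun _ => 0) (hcd.mono fun k hk => by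
        simp only [Function.comp, hk.gain, sub_self])) tendsto_const_nhds
      exact sub_eq_zero.1 t2
    · have c1 : Continuous fun p : ℝ × (Matrix (Fin n) (Fin n) ℂ × Matrix (Fin m) (Fin n) ℂ) =>
          Aᴴ * p.2.1 * A - p.2.1 - p.2.2ᴴ * (1 + Bᴴ * p.2.1 * B) * p.2.2
            + (p.1 : ℂ) • (1 : Matrix (Fin n) (Fin n) ℂ) := by fun_prop
      have t1 := (c1.tendsto (0, (P0, K0))).comp (he0.prodMk_nhds hlim)
      exact tendsto_nhds_unique (t1.congr' (f₂ := fun _ => 0) (hcd.mono fun k hk => by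
        simpa only [Function.comp] using hk.ric)) tendsto_const_nhds
  have := P0_zero hA L hL h0
  subst this
  exact ⟨φ, hP0⟩


lemma quad_le {S : Matrix (Fin m) (Fin m) ℂ} (hS : S.PosSemidef) (y : Fin m → ℂ) :
    (star y ⬝ᵥ S *ᵥ y).re ≤ ‖S‖ * (star y ⬝ᵥ y).re := by
  have h1 : S ≤ algebraMap ℝ _ ‖S‖ := IsSelfAdjoint.le_algebraMap_norm_self hS.1
  have h2 := (Matrix.le_iff.1 h1).dotProduct_mulVec_nonneg y
  rw [Matrix.sub_mulVec, dotProduct_sub, Algebra.algebraMap_eq_smul_one, Matrix.smul_mulVec,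
    Matrix.one_mulVec, dotProduct_smul] at h2
  have h3 := (Complex.nonneg_iff.1 h2).1
  rw [Complex.sub_re, Complex.smul_re, smul_eq_mul] at h3
  linarith

lemma CD.contra (h : CD A B ε P K) (hε : 0 < ε) {c z : ℂ} {v : Fin n → ℂ} (hv : v ≠ 0)
    (hz : 1 ≤ ‖z‖) (he : (A - c • (B * K)) *ᵥ v = z • v) {ρ δ : ℝ} (hcρ : ‖c‖ ≤ ρ)
    (hδ : δ ≤ 2 * c.re - 1) (hδ0 : 0 < δ) (hS : ρ ^ 2 * ‖Bᴴ * P * B‖ ≤ δ) : False := by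
  have h1 := congrArg (fun X => (star v ⬝ᵥ (X *ᵥ v)).re) (h.scaled c)
  have hl : star v ⬝ᵥ (((A - c • (B * K))ᴴ * P * (A - c • (B * K))) *ᵥ v) =
      ((‖z‖ ^ 2 : ℝ) : ℂ) * (star v ⬝ᵥ P *ᵥ v) := by
    rw [Matrix.mul_assoc, ← Matrix.mulVec_mulVec, Matrix.dotProduct_mulVec, ← Matrix.star_mulVec,
      ← Matrix.mulVec_mulVec, he, Matrix.mulVec_smul, star_smul, smul_dotProduct, dotProduct_smul]
    push_cast
    rw [← Complex.conj_mul']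
    simp [mul_assoc]
  have hK : star v ⬝ᵥ ((Kᴴ * K) *ᵥ v) = star (K *ᵥ v) ⬝ᵥ (K *ᵥ v) := by
    rw [← Matrix.mulVec_mulVec, Matrix.dotProduct_mulVec _ Kᴴ, ← Matrix.star_mulVec]
  have hKS : star v ⬝ᵥ ((Kᴴ * (Bᴴ * (P * (B * K)))) *ᵥ v) =
      star (K *ᵥ v) ⬝ᵥ ((Bᴴ * P * B) *ᵥ (K *ᵥ v)) := by
    rw [← Matrix.mulVec_mulVec, Matrix.dotProduct_mulVec _ Kᴴ, ← Matrix.star_mulVec,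
      Matrix.mulVec_mulVec]
    simp only [Matrix.mul_assoc]
  simp only [hl, Matrix.sub_mulVec, Matrix.add_mulVec, Matrix.smul_mulVec, dotProduct_sub,
    dotProduct_add, dotProduct_smul, hK, hKS, Matrix.one_mulVec, smul_eq_mul, Complex.sub_re,
    Complex.add_re, Complex.re_ofReal_mul] at h1
  have q0 := (Complex.nonneg_iff.1 (h.psd.dotProduct_mulVec_nonneg v)).1
  have s0 := (Complex.nonneg_iff.1 (h.S_psd.dotProduct_mulVec_nonneg (K *ᵥ v))).1
  have s1 := quad_le h.S_psd (K *ᵥ v)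
  have y0 : 0 ≤ (star (K *ᵥ v) ⬝ᵥ (K *ᵥ v)).re :=
    (Complex.nonneg_iff.1 (dotProduct_star_self_nonneg _)).1
  have v0 : 0 < (star v ⬝ᵥ v).re :=
    (Complex.pos_iff.1 (dotProduct_star_self_pos_iff.2 hv)).1
  generalize (star (K *ᵥ v) ⬝ᵥ ((Bᴴ * P * B) *ᵥ (K *ᵥ v))).re = s at *
  generalize (star (K *ᵥ v) ⬝ᵥ (K *ᵥ v)).re = y at *
  generalize (star v ⬝ᵥ v).re = w at *
  generalize (star v ⬝ᵥ P *ᵥ v).re = q at *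
  have hz2 : q ≤ ‖z‖ ^ 2 * q := le_mul_of_one_le_left q0 (one_le_pow₀ hz)
  have hc2 : ‖c‖ ^ 2 * s ≤ ρ ^ 2 * s := by gcongr
  have hs2 : ρ ^ 2 * s ≤ ρ ^ 2 * (‖Bᴴ * P * B‖ * y) := by gcongr
  have hs3 : ρ ^ 2 * (‖Bᴴ * P * B‖ * y) ≤ δ * y := by rw [← mul_assoc]; gcongr
  have hd : δ * (y + s) ≤ (2 * c.re - 1) * (y + s) := by gcongr
  have : 0 < ε * w := by positivity
  have : 0 ≤ δ * s := by positivity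
  linarith

lemma no_bad (hA : ∀ μ ∈ spectrum ℂ A, ‖μ‖ ≤ 1)
    (L : Matrix (Fin m) (Fin n) ℂ) (hL : SchurStableC (A - B * L))
    (P : ℝ → Matrix (Fin n) (Fin n) ℂ) (K : ℝ → Matrix (Fin m) (Fin n) ℂ)
    (h : ∀ ε > 0, CD A B ε (P ε) (K ε)) (ρ : ℝ) (hρ : 0 < ρ) (κ : ℕ)
    (hcos : ∀ μ ∈ spectrum ℂ A, ‖μ‖ = 1 → 1 / 2 < ρ * ((μ ^ κ)⁻¹).re) :
    ∀ᶠ ε in 𝓝[>] (0 : ℝ), ∀ (z : ℂ) (v : Fin n → ℂ), v ≠ 0 → 1 ≤ ‖z‖ →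
      z ^ (κ + 1) • v ≠ z ^ κ • A *ᵥ v - ((ρ : ℂ) • (B * K ε)) *ᵥ v := by
  by_contra hcon
  have hPt := P_tendsto hA L hL P K h
  have hKt : Tendsto K (𝓝[>] 0) (𝓝 0) := by
    rw [tendsto_zero_iff_norm_tendsto_zero]
    have h1 := (tendsto_zero_iff_norm_tendsto_zero.1 hPt).sqrt
    rw [Real.sqrt_zero] at h1
    refine squeeze_zero' (Eventually.of_forall fun _ => norm_nonneg _) ?_ h1
    filter_upwards [self_mem_nhdsWithin] with ε hε
    apply Real.le_sqrt_of_sq_le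
    rw [sq]
    exact (h ε hε).K_norm (le_of_lt hε)
  obtain ⟨ns, hns, hbad⟩ := exists_seq_forall_of_frequently (not_eventually.1 hcon)
  push Not at hbad
  choose z v hv hz heq using hbad
  set c : ℕ → ℂ := fun k => ρ * (z k ^ κ)⁻¹ with hc
  have hz0 : ∀ k, z k ≠ 0 := fun k h0 => by
    have := hz k
    rw [h0, norm_zero] at this
    linarith
  have hcρ : ∀ k, ‖c k‖ ≤ ρ := fun k => by
    have h1 : 1 ≤ ‖z k‖ ^ κ := one_le_pow₀ (hz k)
    have h2 : (‖z k‖ ^ κ)⁻¹ ≤ 1 := inv_le_one_of_one_le₀ h1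
    simp only [hc, norm_mul, norm_inv, norm_pow, Complex.norm_real, Real.norm_eq_abs, abs_of_pos hρ]
    nlinarith
  have he : ∀ k, (A - c k • (B * K (ns k))) *ᵥ v k = z k • v k := fun k => by
    have hzk : z k ^ κ ≠ 0 := pow_ne_zero _ (hz0 k)
    have h1 := congrArg (fun x => (z k ^ κ)⁻¹ • x) (heq k)
    simp only [smul_sub, smul_smul, Matrix.smul_mulVec] at h1
    rw [inv_mul_cancel₀ hzk, pow_succ, ← mul_assoc, inv_mul_cancel₀ hzk, one_mul, one_smul] at h1
    rw [h1, Matrix.sub_mulVec, Matrix.smul_mulVec, mul_comm _ (ρ : ℂ)]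
  have hKn : Tendsto (fun k => K (ns k)) atTop (𝓝 0) := hKt.comp hns
  have hPn : Tendsto (fun k => P (ns k)) atTop (𝓝 0) := hPt.comp hns
  have hcK : Tendsto (fun k => c k • (B * K (ns k))) atTop (𝓝 0) := by
    rw [tendsto_zero_iff_norm_tendsto_zero]
    have h1 : Tendsto (fun k => ρ * (‖B‖ * ‖K (ns k)‖)) atTop (𝓝 0) := by
      have := ((tendsto_zero_iff_norm_tendsto_zero.1 hKn).const_mul ‖B‖).const_mul ρ
      simpa using this
    refine squeeze_zero (fun _ => norm_nonneg _) (fun k => ?_) h1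
    rw [norm_smul]
    exact mul_le_mul (hcρ k) (Matrix.l2_opNorm_mul _ _) (norm_nonneg _) hρ.le
  have hM : Tendsto (fun k => A - c k • (B * K (ns k))) atTop (𝓝 A) := by
    simpa using hcK.const_sub A
  have hspec : ∀ k, z k ∈ spectrum ℂ (A - c k • (B * K (ns k))) := fun k => mem_spec (hv k) (he k)
  have hzb : ∀ᶠ k in atTop, z k ∈ Metric.closedBall (0 : ℂ)
      ((‖A‖ + 1) * ‖(1 : Matrix (Fin n) (Fin n) ℂ)‖) := by
    filter_upwards [hM.norm.eventually (ge_mem_nhds (show ‖A‖ < ‖A‖ + 1 by linarith))] with k hk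
    rw [mem_closedBall_zero_iff]
    exact (spectrum.norm_le_norm_mul_of_mem (hspec k)).trans (by gcongr)
  obtain ⟨z0, -, φ, hφ, hzl⟩ := tendsto_subseq_of_frequently_bounded
    Metric.isBounded_closedBall hzb.frequently
  have hzl' : Tendsto (fun k => z (φ k)) atTop (𝓝 z0) := hzl
  have hz1 : 1 ≤ ‖z0‖ := ge_of_tendsto hzl'.norm (Eventually.of_forall fun k => hz _)
  have hz0s : z0 ∈ spectrum ℂ A := by
    have hdet : ∀ (w : ℂ) (M : Matrix (Fin n) (Fin n) ℂ), w ∈ spectrum ℂ M ↔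
        (w • (1 : Matrix (Fin n) (Fin n) ℂ) - M).det = 0 := fun w M => by
      rw [spectrum.mem_iff, Algebra.algebraMap_eq_smul_one, Matrix.isUnit_iff_isUnit_det,
        isUnit_iff_ne_zero, not_not]
    rw [hdet]
    have c1 : Continuous fun p : ℂ × Matrix (Fin n) (Fin n) ℂ =>
        (p.1 • (1 : Matrix (Fin n) (Fin n) ℂ) - p.2).det := by fun_prop
    have t1 := (c1.tendsto (z0, A)).comp (hzl'.prodMk_nhds (hM.comp hφ.tendsto_atTop))
    exact tendsto_nhds_unique (t1.congr (f₂ := fun _ => 0) fun k =>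
      (hdet _ _).1 (hspec (φ k))) tendsto_const_nhds
  have hzn : ‖z0‖ = 1 := le_antisymm (hA _ hz0s) hz1
  have hz00 : z0 ≠ 0 := fun h0 => by rw [h0, norm_zero] at hzn; linarith
  have hcl : Tendsto (fun k => (c (φ k)).re) atTop (𝓝 (ρ * ((z0 ^ κ)⁻¹).re)) := by
    have h1 : Tendsto (fun k => c (φ k)) atTop (𝓝 (ρ * (z0 ^ κ)⁻¹)) :=
      ((hzl'.pow κ).inv₀ (pow_ne_zero _ hz00)).const_mul _
    have h2 := (Complex.continuous_re.tendsto _).comp h1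
    rw [Complex.re_ofReal_mul] at h2
    exact h2
  have hgt := hcos _ hz0s hzn
  set r := ρ * ((z0 ^ κ)⁻¹).re
  have ev1 : ∀ᶠ k in atTop, (r + 1 / 2) / 2 < (c (φ k)).re :=
    hcl.eventually (lt_mem_nhds (by linarith))
  have hSt : Tendsto (fun k => ρ ^ 2 * ‖Bᴴ * P (ns (φ k)) * B‖) atTop (𝓝 0) := by
    have c1 : Continuous fun p : Matrix (Fin n) (Fin n) ℂ => ρ ^ 2 * ‖Bᴴ * p * B‖ := by fun_prop
    have := (c1.tendsto 0).comp (hPn.comp hφ.tendsto_atTop)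
    simpa using! this
  have ev2 : ∀ᶠ k in atTop, ρ ^ 2 * ‖Bᴴ * P (ns (φ k)) * B‖ ≤ r - 1 / 2 :=
    hSt.eventually (ge_mem_nhds (by linarith))
  have ev3 : ∀ᶠ k in atTop, 0 < ns (φ k) :=
    (hns.comp hφ.tendsto_atTop).eventually self_mem_nhdsWithin
  obtain ⟨k, k1, k2, k3⟩ := (ev1.and (ev2.and ev3)).exists
  exact (h _ k3).contra k3 (hv _) (hz _) (he _) (hcρ _) (δ := r - 1 / 2) (by linarith)
    (by linarith) k2

end Core

section Main

open scoped ComplexOrder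

/-- complexification -/
def cM {a b : ℕ} (M : Matrix (Fin a) (Fin b) ℝ) : Matrix (Fin a) (Fin b) ℂ := M.map Complex.ofReal

lemma cM_mul {a b c : ℕ} (M : Matrix (Fin a) (Fin b) ℝ) (N : Matrix (Fin b) (Fin c) ℝ) :
    cM (M * N) = cM M * cM N := by
  ext i j; simp [cM, Matrix.mul_apply]

lemma cM_add {a b : ℕ} (M N : Matrix (Fin a) (Fin b) ℝ) : cM (M + N) = cM M + cM N := by
  ext i j; simp [cM]

lemma cM_sub {a b : ℕ} (M N : Matrix (Fin a) (Fin b) ℝ) : cM (M - N) = cM M - cM N := by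
  ext i j; simp [cM]

lemma cM_smul {a b : ℕ} (r : ℝ) (M : Matrix (Fin a) (Fin b) ℝ) : cM (r • M) = (r : ℂ) • cM M := by
  ext i j; simp [cM]

lemma cM_one {a : ℕ} : cM (1 : Matrix (Fin a) (Fin a) ℝ) = 1 := by
  ext i j; simp [cM, Matrix.one_apply, apply_ite]

lemma cM_zero {a b : ℕ} : cM (0 : Matrix (Fin a) (Fin b) ℝ) = 0 := by
  ext i j; simp [cM]

lemma cM_transpose {a b : ℕ} (M : Matrix (Fin a) (Fin b) ℝ) : cM Mᵀ = (cM M)ᴴ := by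
  ext i j; simp [cM, Matrix.conjTranspose_apply]

lemma cM_mulVec {a b : ℕ} (M : Matrix (Fin a) (Fin b) ℝ) (v : Fin b → ℝ) :
    (fun i => ((M *ᵥ v) i : ℂ)) = cM M *ᵥ (fun i => (v i : ℂ)) := by
  ext i; simp [cM, Matrix.mulVec, dotProduct]

open scoped MatrixOrder in
lemma cM_psd {a : ℕ} {M : Matrix (Fin a) (Fin a) ℝ} (h : M.PosSemidef) : (cM M).PosSemidef := by
  obtain ⟨L, hL⟩ := CStarAlgebra.nonneg_iff_eq_star_mul_self.1 h.nonneg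
  rw [hL, Matrix.star_eq_conjTranspose, Matrix.conjTranspose_eq_transpose_of_trivial, cM_mul,
    cM_transpose]
  exact posSemidef_conjTranspose_mul_self _

lemma cd_of_dare {n m : ℕ} {A : Matrix (Fin n) (Fin n) ℝ} {B : Matrix (Fin n) (Fin m) ℝ} {ε : ℝ}
    {P : Matrix (Fin n) (Fin n) ℝ} (h : IsDARESol A B ε P) :
    CD (cM A) (cM B) ε (cM P) (cM (gainK A B P)) := by
  obtain ⟨hpd, hr⟩ := h
  have hS : (Bᵀ * P * B).PosSemidef := by
    have := hpd.posSemidef.conjTranspose_mul_mul_same B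
    rwa [Matrix.conjTranspose_eq_transpose_of_trivial] at this
  have hR : (1 + Bᵀ * P * B).PosDef := Matrix.PosDef.one.add_posSemidef hS
  have hRu : IsUnit (1 + Bᵀ * P * B).det := (Matrix.isUnit_iff_isUnit_det _).1 hR.isUnit
  have hPs : Pᵀ = P := by
    have := hpd.1.eq
    rwa [Matrix.conjTranspose_eq_transpose_of_trivial] at this
  have hgain : (1 + Bᵀ * P * B) * gainK A B P = Bᵀ * P * A := by
    rw [gainK, Matrix.mul_nonsing_inv_cancel_left _ _ hRu]
  have hgainT : (gainK A B P)ᵀ * (1 + Bᵀ * P * B) = Aᵀ * P * B := by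
    have := congrArg Matrix.transpose hgain
    simpa [Matrix.transpose_mul, hPs, Matrix.mul_assoc] using this
  have hric : Aᵀ * P * A - P - (gainK A B P)ᵀ * (1 + Bᵀ * P * B) * gainK A B P
      + ε • (1 : Matrix (Fin n) (Fin n) ℝ) = 0 := by
    rw [hgainT, gainK, ← Matrix.mul_assoc (Aᵀ * P * B)]
    exact hr
  refine ⟨cM_psd hpd.posSemidef, ?_, ?_⟩
  · have := congrArg cM hgain
    simpa only [cM_mul, cM_add, cM_one, cM_transpose] using this
  · have := congrArg cM hric
    simpa only [cM_mul, cM_add, cM_sub, cM_smul, cM_zero, cM_one, cM_transpose] using this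

lemma cos_bound {n : ℕ} (A : Matrix (Fin n) (Fin n) ℝ) (κbar : ℕ)
    (hκbar : (κbar : ℝ) * omegaMax A < Real.pi / 2) (ρ : ℝ) (hρpos : 0 < ρ)
    (hρ : 1 / 2 < ρ * Real.cos ((κbar : ℝ) * omegaMax A)) (κ : ℕ) (hκ : κ ≤ κbar) :
    ∀ μ ∈ spectrum ℂ (cM A), ‖μ‖ = 1 → 1 / 2 < ρ * ((μ ^ κ)⁻¹).re := by
  intro μ hμ hn
  have hns : ¬ SchurStable A := fun hs => by
    have := hs μ hμ
    linarith
  have hdet : ∀ w : ℂ, w ∈ spectrum ℂ (cM A) ↔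
      (w • (1 : Matrix (Fin n) (Fin n) ℂ) - cM A).det = 0 := fun w => by
    rw [spectrum.mem_iff, Algebra.algebraMap_eq_smul_one, Matrix.isUnit_iff_isUnit_det,
      isUnit_iff_ne_zero, not_not]
  have hexp : Complex.exp (μ.arg * Complex.I) = μ := by
    have := Complex.norm_mul_exp_arg_mul_I μ
    rwa [hn, Complex.ofReal_one, one_mul] at this
  have hconj : star μ ∈ spectrum ℂ (cM A) := by
    rw [hdet] at hμ ⊢
    have h1 := congrArg (starRingEnd ℂ) hμ
    rw [RingHom.map_det, map_zero] at h1
    rw [← h1]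
    congr 1
    ext i j
    simp [cM, Matrix.one_apply, apply_ite]
  have hmem : |μ.arg| ∈ {ω : ℝ | ω ∈ Set.Icc 0 Real.pi ∧
    (Complex.exp (ω * Complex.I) • (1 : Matrix (Fin n) (Fin n) ℂ)
      - A.map Complex.ofReal).det = 0} := by
    refine ⟨⟨abs_nonneg _, Complex.abs_arg_le_pi μ⟩, ?_⟩
    rcases abs_cases μ.arg with ⟨h1, -⟩ | ⟨h1, -⟩
    · rw [h1, hexp]
      exact (hdet _).1 hμ
    · rw [h1]
      have : Complex.exp (((-μ.arg : ℝ) : ℂ) * Complex.I) = star μ := by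
        conv_rhs => rw [← hexp]
        rw [Complex.star_def, ← Complex.exp_conj]
        simp
      rw [this]
      exact (hdet _).1 hconj
  have hle : |μ.arg| ≤ omegaMax A := by
    rw [omegaMax, if_neg hns]
    exact le_csSup ⟨Real.pi, fun ω hω => hω.1.2⟩ hmem
  have hre : ((μ ^ κ)⁻¹).re = Real.cos (κ * |μ.arg|) := by
    have h1 : (μ ^ κ)⁻¹ = Complex.exp (((-(κ * μ.arg) : ℝ) : ℂ) * Complex.I) := by
      conv_lhs => rw [← hexp]
      rw [← Complex.exp_nat_mul, ← Complex.exp_neg]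
      congr 1
      push_cast
      ring
    rw [h1, Complex.exp_ofReal_mul_I_re, Real.cos_neg, ← Real.cos_abs, abs_mul, Nat.abs_cast]
  rw [hre]
  have hk : (κ : ℝ) * |μ.arg| ≤ κbar * omegaMax A := by
    have : (κ : ℝ) ≤ κbar := by exact_mod_cast hκ
    gcongr
  have hcos : Real.cos (κbar * omegaMax A) ≤ Real.cos (κ * |μ.arg|) :=
    Real.cos_le_cos_of_nonneg_of_le_pi (by positivity) (by linarith [Real.pi_pos]) hk
  calc 1 / 2 < _ := hρ
    _ ≤ _ := by gcongr

end Main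

/-- for `ρ cos(κ̄·ω_max) > 1/2` there exists `ε* > 0` such that for all
`ε ∈ (0, ε*]` and every integer delay `κ ∈ {0,…,κ̄}`, every solution of the delayed
closed-loop system `x(k+1) = A x(k) − ρ B K_ε x(k−κ)` converges to zero. Time is
shifted by `κbar` so that `x : ℕ → ℝⁿ` represents the trajectory on integers `≥ -κbar`,
with arbitrary initial data on `{−κ̄,…,0}`. -/
theorem delayed_closed_loop_stability {n m : ℕ}
    (A : Matrix (Fin n) (Fin n) ℝ) (B : Matrix (Fin n) (Fin m) ℝ)
    (hstab : Stabilizable A B) (hA : EigInClosedUnitDisc A)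
    (κbar : ℕ) (hκbar : (κbar : ℝ) * omegaMax A < Real.pi / 2)
    (ρ : ℝ) (hρpos : 0 < ρ) (hρ : 1 / 2 < ρ * Real.cos ((κbar : ℝ) * omegaMax A))
    (P : ℝ → Matrix (Fin n) (Fin n) ℝ)
    (hP : ∀ ε > (0 : ℝ), IsDARESol A B ε (P ε)) :
    ∃ εstar > (0 : ℝ), ∀ ε ∈ Set.Ioc (0 : ℝ) εstar,
      ∀ κ : ℕ, κ ≤ κbar →
      ∀ x : ℕ → Fin n → ℝ,
        (∀ k : ℕ, x (k + κbar + 1)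
          = A.mulVec (x (k + κbar))
            - ρ • (B * gainK A B (P ε)).mulVec (x (k + κbar - κ))) →
        Tendsto x atTop (nhds 0) := by
  obtain ⟨L, hL⟩ := hstab
  have hL' : SchurStableC (cM A - cM B * cM L) := by
    have h1 : SchurStableC (cM (A - B * L)) := hL
    rwa [cM_sub, cM_mul] at h1
  have hev : ∀ κ ∈ Finset.range (κbar + 1), ∀ᶠ ε in 𝓝[>] (0 : ℝ),
      ∀ (z : ℂ) (v : Fin n → ℂ), v ≠ 0 → 1 ≤ ‖z‖ →
      z ^ (κ + 1) • v ≠ z ^ κ • cM A *ᵥ v - ((ρ : ℂ) • (cM B * cM (gainK A B (P ε)))) *ᵥ v := by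
    intro κ hκ
    exact no_bad hA (cM L) hL' (fun ε => cM (P ε)) (fun ε => cM (gainK A B (P ε)))
      (fun ε hε => cd_of_dare (hP ε hε)) ρ hρpos κ
      (cos_bound A κbar hκbar ρ hρpos hρ κ (by simpa [Nat.lt_succ_iff] using hκ))
  rw [← Filter.eventually_all_finset] at hev
  obtain ⟨e, he, hsub⟩ := mem_nhdsGT_iff_exists_Ioc_subset.1 hev
  refine ⟨e, he, fun ε hε κ hκ x hx => ?_⟩
  have hbad := hsub hε κ (by simpa [Nat.lt_succ_iff] using hκ)
  have hy := delay_conv κ (cM A) ((ρ : ℂ) • (cM B * cM (gainK A B (P ε)))) hbad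
    (fun j i => (x (j + (κbar - κ)) i : ℂ)) (fun k => by
      have h1 := hx k
      have e1 : k + κ + 1 + (κbar - κ) = k + κbar + 1 := by omega
      have e2 : k + κ + (κbar - κ) = k + κbar := by omega
      have e3 : k + (κbar - κ) = k + κbar - κ := by omega
      simp only [e1, e2, e3]
      rw [← cM_mul, ← cM_smul, ← cM_mulVec, ← cM_mulVec, h1]
      ext i
      simp [Matrix.smul_mulVec])
  rw [← tendsto_add_atTop_iff_nat (κbar - κ)]
  rw [tendsto_pi_nhds] at hy ⊢
  intro i
  have h2 := (Complex.continuous_re.tendsto _).comp (hy i)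
  simpa [Function.comp_def] using h2
end
end
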